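/- arXiv:1406.7126 — 6 statements merged into one kernel-verified Lean document; each statement's English description precedes it below -/
import Mathlib

section
/- Let η ∈ (0,1) be a constant and let p : ℕ → ℝ satisfy 0 < p(n) ≤ 1 − η and log(1/p(n))/log n → 0 as n → ∞ (i.e. p(n) ≥ e^{−o(log n)}). With b(n) := 1/(1 − p(n)) and log_b(np) := log(n·p(n))/log b(n), for every constant ε > 0 the probability that the game chromatic number of the Erdős–Rényi random graph G_{n,p(n)} satisfies χ_g(G_{n,p(n)}) ≤ (1 + ε)·n/log_b(np) tends to 1 as n → ∞. -/
open MeasureTheory Filter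


abbrev EdgeIdx (n : ℕ) := {e : Sym2 (Fin n) // ¬ e.IsDiag}

noncomputable def bernoulliBool (p : ℝ) : Measure Bool :=
  ENNReal.ofReal p • Measure.dirac true + ENNReal.ofReal (1 - p) • Measure.dirac false

noncomputable def erMeasure (n : ℕ) (p : ℝ) : Measure (EdgeIdx n → Bool) :=
  Measure.pi fun _ => bernoulliBool p

def erGraph (n : ℕ) (ω : EdgeIdx n → Bool) : SimpleGraph (Fin n) where
  Adj u v := u ≠ v ∧ ∀ h : ¬ (s(u, v) : Sym2 (Fin n)).IsDiag, ω ⟨s(u, v), h⟩ = true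
  symm := by
    constructor
    rintro u v ⟨hne, h⟩
    refine ⟨hne.symm, fun hd => ?_⟩
    have hs : (s(v, u) : Sym2 (Fin n)) = s(u, v) := Sym2.eq_swap
    have hd' : ¬ (s(u, v) : Sym2 (Fin n)).IsDiag := by rw [← hs]; exact hd
    exact (congrArg ω (Subtype.ext hs)).trans (h hd')
  loopless := by constructor; rintro u ⟨h, -⟩; exact h rfl

/-- A legal move in the coloring game: color vertex `v` with color `c`. -/
def LegalMove {V : Type*} {k : ℕ} (G : SimpleGraph V)
    (f : V → Option (Fin k)) (v : V) (c : Fin k) : Prop :=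
  f v = none ∧ ∀ u, G.Adj u v → f u ≠ some c

/-- A strategy maps a partial coloring to a move (vertex, color). -/
def Strategy (V : Type*) (k : ℕ) := (V → Option (Fin k)) → V × Fin k

/-- A strategy is legal if it plays a legal move whenever one exists. -/
def Strategy.IsLegal {V : Type*} {k : ℕ} (σ : Strategy V k) (G : SimpleGraph V) : Prop :=
  ∀ f : V → Option (Fin k), (∃ v c, LegalMove G f v c) →
    LegalMove G f (σ f).1 (σ f).2

open Classical in
/-- The play of the coloring game: Maker (using `σM`) moves at even steps,
Breaker (using `σB`) at odd steps; the position freezes once no legal move exists. -/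
noncomputable def play {V : Type*} [DecidableEq V] {k : ℕ} (G : SimpleGraph V)
    (σM σB : Strategy V k) : ℕ → V → Option (Fin k)
  | 0 => fun _ => none
  | t + 1 =>
    let f := play G σM σB t
    if ∃ v c, LegalMove G f v c then
      let m := if t % 2 = 0 then σM f else σB f
      Function.update f m.1 (some m.2)
    else f

/-- Maker wins the coloring game with `k` colors on `G`. -/
def MakerWins {V : Type*} [Fintype V] [DecidableEq V] (G : SimpleGraph V) (k : ℕ) : Prop :=
  ∃ σM : Strategy V k, σM.IsLegal G ∧
    ∀ σB : Strategy V k, σB.IsLegal G →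
      ∀ v : V, play G σM σB (Fintype.card V) v ≠ none

/-- Breaker wins the coloring game with `k` colors on `G`. -/
def BreakerWins {V : Type*} [Fintype V] [DecidableEq V] (G : SimpleGraph V) (k : ℕ) : Prop :=
  ∃ σB : Strategy V k, σB.IsLegal G ∧
    ∀ σM : Strategy V k, σM.IsLegal G →
      ∃ v : V, play G σM σB (Fintype.card V) v = none

/-- The game chromatic number of `G`. -/
noncomputable def gameChromaticNumber {V : Type*} [Fintype V] [DecidableEq V]
    (G : SimpleGraph V) : ℕ :=
  sInf {k | MakerWins G k}


open Classical in
theorem makerWins_of_invariant {V : Type*} [Fintype V] [DecidableEq V] [Nonempty V] {k : ℕ}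
    (hk : 0 < k) (G : SimpleGraph V)
    (GM GB : (V → Option (Fin k)) → Prop)
    (h0 : GM (fun _ => none))
    (hM : ∀ f, GM f → (∃ v, f v = none) →
      ∃ v c, LegalMove G f v c ∧ GB (Function.update f v (some c)))
    (hB : ∀ f, GB f → (∀ v, f v = none → ∃ c, LegalMove G f v c) ∧
      ∀ v c, LegalMove G f v c → GM (Function.update f v (some c))) :
    MakerWins G k := by
  classical
  let good : (V → Option (Fin k)) → V × Fin k → Prop := fun f m =>
    LegalMove G f m.1 m.2 ∧ GB (Function.update f m.1 (some m.2))
  let σ : Strategy V k := fun f =>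
    if h : ∃ m, good f m then h.choose
    else if h' : ∃ m : V × Fin k, LegalMove G f m.1 m.2 then h'.choose
    else (Classical.arbitrary V, ⟨0, hk⟩)
  have hσ1 : ∀ f, (∃ m, good f m) → good f (σ f) := by
    intro f h
    simp only [σ, dif_pos h]
    exact h.choose_spec
  refine ⟨σ, ?_, ?_⟩
  · intro f hf
    by_cases h : ∃ m, good f m
    · exact (hσ1 f h).1
    · have h' : ∃ m : V × Fin k, LegalMove G f m.1 m.2 := by
        obtain ⟨v, c, hvc⟩ := hf
        exact ⟨(v, c), hvc⟩
      simp only [σ, dif_neg h, dif_pos h']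
      exact h'.choose_spec
  · intro σB hσB
    have key : ∀ t, t ≤ Fintype.card V →
        (Finset.univ.filter (fun v => play G σ σB t v = none)).card + t = Fintype.card V ∧
        (t % 2 = 0 → GM (play G σ σB t)) ∧ (t % 2 = 1 → GB (play G σ σB t)) := by
      intro t
      induction t with
      | zero =>
        intro _
        refine ⟨?_, ?_, ?_⟩
        · simp [play]
        · intro _
          exact h0
        · intro h
          simp at h
      | succ t ih =>
        intro ht
        obtain ⟨h1, h2, h3⟩ := ih (by omega)
        set f := play G σ σB t with hf
        have hne : ∃ v, f v = none := by
          have : 0 < (Finset.univ.filter (fun v => f v = none)).card := by omega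
          obtain ⟨v, hv⟩ := Finset.card_pos.mp this
          exact ⟨v, by simpa using hv⟩
        have hcard : ∀ v c, f v = none →
            (Finset.univ.filter (fun u => Function.update f v (some c) u = none)).card + (t + 1)
              = Fintype.card V := by
          intro v c hv
          have : (Finset.univ.filter (fun u => Function.update f v (some c) u = none))
              = (Finset.univ.filter (fun u => f u = none)).erase v := by
            ext u
            by_cases huv : u = v
            · subst huv; simp
            · simp [huv]
          rw [this, Finset.card_erase_of_mem (by simpa using hv)]
          have : 0 < (Finset.univ.filter (fun v => f v = none)).card := by omega
          omega
        rcases Nat.mod_two_eq_zero_or_one t with ht2 | ht2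
        · obtain ⟨v, c, hl, hgb⟩ := hM f (h2 ht2) hne
          have hg := hσ1 f ⟨(v, c), hl, hgb⟩
          have hp : play G σ σB (t + 1) = Function.update f (σ f).1 (some (σ f).2) := by
            simp only [play]
            rw [← hf, if_pos ⟨v, c, hl⟩, if_pos ht2]
          rw [hp]
          refine ⟨hcard _ _ hg.1.1, ?_, fun _ => hg.2⟩
          intro h
          omega
        · obtain ⟨hb1, hb2⟩ := hB f (h3 ht2)
          obtain ⟨v, hv⟩ := hne
          obtain ⟨c, hl⟩ := hb1 v hv
          have hg := hσB f ⟨v, c, hl⟩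
          have hp : play G σ σB (t + 1) = Function.update f (σB f).1 (some (σB f).2) := by
            simp only [play]
            rw [← hf, if_pos ⟨v, c, hl⟩, if_neg (by omega)]
          rw [hp]
          refine ⟨hcard _ _ hg.1, fun _ => hb2 _ _ hg, ?_⟩
          intro h
          omega
    intro v hv
    have := (key _ le_rfl).1
    have h0 : (Finset.univ.filter
      (fun v => play G σ σB (Fintype.card V) v = none)).card = 0 := by omega
    rw [Finset.card_eq_zero] at h0
    have : v ∈ (∅ : Finset V) := by rw [← h0]; simpa using hv
    simp at this

/-- colors available at `v` -/
noncomputable def availC {V : Type*} {k : ℕ} (G : SimpleGraph V) (f : V → Option (Fin k)) (v : V) :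
    Finset (Fin k) := by
  classical exact Finset.univ.filter (fun c => ∀ u, G.Adj u v → f u ≠ some c)

theorem mem_availC {V : Type*} {k : ℕ} (G : SimpleGraph V) (f : V → Option (Fin k)) (v : V)
    (c : Fin k) : c ∈ availC G f v ↔ ∀ u, G.Adj u v → f u ≠ some c := by
  simp [availC]

theorem hall_boxes {V C : Type*} [DecidableEq V] [DecidableEq C] (θ : ℕ) (T : Finset V)
    (A : V → Finset C) (h : ∀ S ⊆ T, θ * S.card ≤ (S.biUnion A).card) :
    ∃ Z : V → Finset C, (∀ v ∈ T, Z v ⊆ A v ∧ (Z v).card = θ) ∧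
      ∀ u ∈ T, ∀ v ∈ T, u ≠ v → Disjoint (Z u) (Z v) := by
  classical
  have hall := (Finset.all_card_le_biUnion_card_iff_exists_injective
    (fun x : T × Fin θ => A x.1.1)).mp (by
      intro s
      have hs : s ⊆ (s.image Prod.fst) ×ˢ (Finset.univ : Finset (Fin θ)) := by
        intro x hx
        simp only [Finset.mem_product, Finset.mem_univ, and_true]
        exact Finset.mem_image_of_mem _ hx
      have h1 := Finset.card_le_card hs
      rw [Finset.card_product, Finset.card_univ, Fintype.card_fin] at h1
      have h2 := h ((s.image Prod.fst).image Subtype.val) (by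
        intro v hv
        simp only [Finset.mem_image] at hv
        obtain ⟨a, _, rfl⟩ := hv
        exact a.2)
      rw [Finset.card_image_of_injective _ Subtype.val_injective] at h2
      have h3 : ((s.image Prod.fst).image Subtype.val).biUnion A = s.biUnion (fun x => A x.1.1) := by
        ext c
        simp only [Finset.mem_biUnion, Finset.mem_image]
        constructor
        · rintro ⟨v, ⟨a, ⟨x, hx, rfl⟩, rfl⟩, hc⟩
          exact ⟨x, hx, hc⟩
        · rintro ⟨x, hx, hc⟩
          exact ⟨x.1.1, ⟨x.1, ⟨x, hx, rfl⟩, rfl⟩, hc⟩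
      rw [h3] at h2
      calc s.card ≤ _ := h1
        _ = θ * _ := Nat.mul_comm _ _
        _ ≤ _ := h2)
  obtain ⟨φ, hinj, hφ⟩ := hall
  refine ⟨fun v => if hv : v ∈ T then Finset.univ.image (fun i : Fin θ => φ (⟨v, hv⟩, i)) else ∅,
    ?_, ?_⟩
  · intro v hv
    simp only [dif_pos hv]
    constructor
    · intro c hc
      simp only [Finset.mem_image, Finset.mem_univ, true_and] at hc
      obtain ⟨i, rfl⟩ := hc
      exact hφ (⟨v, hv⟩, i)
    · rw [Finset.card_image_of_injective, Finset.card_univ, Fintype.card_fin]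
      intro i j hij
      have := hinj hij
      simpa using this
  · intro u hu v hv huv
    simp only [dif_pos hu, dif_pos hv]
    rw [Finset.disjoint_left]
    intro c hc hc'
    simp only [Finset.mem_image, Finset.mem_univ, true_and] at hc hc'
    obtain ⟨i, rfl⟩ := hc
    obtain ⟨j, hj⟩ := hc'
    have := hinj hj
    simp only [Prod.mk.injEq, Subtype.mk.injEq] at this
    exact huv this.1.symm


/-- the combinatorial invariant of Maker's strategy; `h` counts hits on the boxes -/
def GInv {V : Type*} [DecidableEq V] {k : ℕ} (G : SimpleGraph V)
    (θ γ : ℕ) (f : V → Option (Fin k)) (h : V → ℕ) : Prop :=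
  ∃ (E : Finset V) (X : Finset (Fin k)) (Z : V → Finset (Fin k)),
    E.card ≤ γ ∧ (∀ v ∈ E, availC G f v ⊆ X) ∧ X.card ≤ θ * E.card ∧
    (∀ S : Finset V, S.Nonempty → (∀ v ∈ S, f v = none ∧ v ∉ E) → E.card + S.card ≤ γ + 1 →
      θ * S.card < (S.biUnion (fun v => availC G f v \ X)).card) ∧
    (∀ v ∈ E, f v = none → Z v ⊆ availC G f v ∧ Z v ⊆ X ∧ θ ≤ (Z v).card + h v) ∧
    (∀ u ∈ E, ∀ v ∈ E, f u = none → f v = none → u ≠ v → Disjoint (Z u) (Z v))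

theorem GInv.legal {V : Type*} [DecidableEq V] {k : ℕ} {G : SimpleGraph V}
    {θ γ : ℕ} {f : V → Option (Fin k)} {h : V → ℕ} (H : GInv G θ γ f h) (v : V)
    (hv : f v = none) (hh : h v < θ) : ∃ c, LegalMove G f v c := by
  obtain ⟨E, X, Z, h1, h2, h3, h4, h5, h6⟩ := H
  by_cases hE : v ∈ E
  · obtain ⟨ha, hb, hc⟩ := h5 v hE hv
    have : 0 < (Z v).card := by omega
    obtain ⟨c, hc⟩ := Finset.card_pos.mp this
    exact ⟨c, hv, (mem_availC _ _ _ _).mp (ha hc)⟩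
  · have := h4 {v} (by simp) (by simpa using ⟨hv, hE⟩) (by simp; omega)
    have : 0 < (({v} : Finset V).biUnion (fun v => availC G f v \ X)).card := by omega
    obtain ⟨c, hc⟩ := Finset.card_pos.mp this
    simp only [Finset.singleton_biUnion, Finset.mem_sdiff] at hc
    exact ⟨c, hv, (mem_availC _ _ _ _).mp hc.1⟩

theorem GInv.move {V : Type*} [Fintype V] [DecidableEq V] {k : ℕ} {G : SimpleGraph V}
    {θ γ : ℕ}
    (HG : ∀ (f : V → Option (Fin k)) (X : Finset (Fin k)), X.card ≤ θ * (γ + 1) →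
      ∀ S : Finset V, (∀ v ∈ S, availC G f v ⊆ X) → S.card ≤ γ)
    {f : V → Option (Fin k)} {h : V → ℕ} (H : GInv G θ γ f h) (w : V) (c : Fin k)
    (hl : LegalMove G f w c) :
    ∃ u0, GInv G θ γ (Function.update f w (some c)) (fun v => h v + if v = u0 then 1 else 0) := by
  classical
  obtain ⟨E, X, Z, h1, h2, h3, h4, h5, h6⟩ := H
  set f' := Function.update f w (some c) with hf'
  have hnone : ∀ v, f' v = none → f v = none := by
    intro v hv
    by_cases hvw : v = w
    · subst hvw; exact hl.1
    · simpa [hf', hvw] using hv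
  have hsub : ∀ v, availC G f' v ⊆ availC G f v := by
    intro v d hd
    rw [mem_availC] at hd ⊢
    intro u hu
    by_cases huw : u = w
    · subst huw; rw [hl.1]; simp
    · have := hd u hu
      simpa [hf', huw] using this
  have hsup : ∀ v, (availC G f v).erase c ⊆ availC G f' v := by
    intro v d hd
    rw [Finset.mem_erase] at hd
    have hd2 := (mem_availC _ _ _ _).mp hd.2
    rw [mem_availC]
    intro u hu
    by_cases huw : u = w
    · subst huw
      simp only [hf', Function.update_self]
      intro h
      exact hd.1 (Option.some.inj h).symm
    · have := hd2 u hu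
      simpa [hf', huw] using this
  have h4' : ∀ S : Finset V, (∀ v ∈ S, f' v = none ∧ v ∉ E) → E.card + S.card ≤ γ + 1 →
      θ * S.card ≤ (S.biUnion (fun v => availC G f' v \ X)).card := by
    intro S hS hc
    rcases S.eq_empty_or_nonempty with rfl | hne
    · simp
    · have hlt := h4 S hne (fun v hv => ⟨hnone v (hS v hv).1, (hS v hv).2⟩) hc
      have hss : (S.biUnion (fun v => availC G f v \ X)).erase c ⊆
          S.biUnion (fun v => availC G f' v \ X) := by
        intro d hd
        simp only [Finset.mem_erase, Finset.mem_biUnion, Finset.mem_sdiff] at hd ⊢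
        obtain ⟨hdc, v, hv, hd1, hd2⟩ := hd
        exact ⟨v, hv, hsup v (Finset.mem_erase.mpr ⟨hdc, hd1⟩), hd2⟩
      have := Finset.card_le_card hss
      have := Finset.pred_card_le_card_erase (s := S.biUnion (fun v => availC G f v \ X)) (a := c)
      omega
  -- maximal tight set
  let P : Finset (Finset V) := Finset.univ.filter (fun S => (∀ v ∈ S, f' v = none ∧ v ∉ E) ∧
    E.card + S.card ≤ γ + 1 ∧ (S.biUnion (fun v => availC G f' v \ X)).card ≤ θ * S.card)
  have hP : P.Nonempty := ⟨∅, by simp [P]; omega⟩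
  obtain ⟨T, hTP, hTmax⟩ := Finset.exists_max_image P Finset.card hP
  simp only [P, Finset.mem_filter, Finset.mem_univ, true_and] at hTP hTmax
  obtain ⟨hT1, hT2, hT3⟩ := hTP
  have hdisj : Disjoint E T := by
    rw [Finset.disjoint_left]
    intro v hv hvT
    exact (hT1 v hvT).2 hv
  set X' := X ∪ T.biUnion (fun v => availC G f' v \ X) with hX'
  have hEc : (E ∪ T).card = E.card + T.card := Finset.card_union_of_disjoint hdisj
  have hX'c : X'.card ≤ θ * (E ∪ T).card := by
    rw [hEc, Nat.mul_add]
    exact (Finset.card_union_le _ _).trans (Nat.add_le_add h3 hT3)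
  have hav : ∀ v ∈ E ∪ T, availC G f' v ⊆ X' := by
    intro v hv d hd
    rw [hX', Finset.mem_union]
    rcases Finset.mem_union.mp hv with hv | hv
    · exact Or.inl (h2 v hv (hsub v hd))
    · by_cases hdX : d ∈ X
      · exact Or.inl hdX
      · exact Or.inr (Finset.mem_biUnion.mpr ⟨v, hv, Finset.mem_sdiff.mpr ⟨hd, hdX⟩⟩)
  have hE'γ : (E ∪ T).card ≤ γ := by
    refine HG f' X' (hX'c.trans ?_) _ hav
    exact Nat.mul_le_mul_left _ (by omega)
  obtain ⟨Y, hY1, hY2⟩ := hall_boxes θ T (fun v => availC G f' v \ X) (by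
    intro S hS
    exact h4' S (fun v hv => hT1 v (hS hv)) (by have := Finset.card_le_card hS; omega))
  -- the hit vertex
  obtain ⟨u0, hu0⟩ : ∃ u0, ∀ v ∈ E, f v = none → c ∈ Z v → v = u0 := by
    by_cases hex : ∃ v ∈ E, f v = none ∧ c ∈ Z v
    · obtain ⟨u, huE, hun, huc⟩ := hex
      refine ⟨u, fun v hv hvn hvc => ?_⟩
      by_contra hne
      exact Finset.disjoint_left.mp (h6 v hv u huE hvn hun hne) hvc huc
    · exact ⟨w, fun v hv hvn hvc => absurd ⟨v, hv, hvn, hvc⟩ hex⟩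
  refine ⟨u0, E ∪ T, X', fun v => if v ∈ T then Y v else (Z v).erase c, hE'γ, hav, hX'c, ?_, ?_, ?_⟩
  · intro S hSne hS hSc
    by_contra hcon
    push Not at hcon
    have hST : Disjoint S T := by
      rw [Finset.disjoint_left]
      intro v hv hvT
      exact (hS v hv).2 (Finset.mem_union_right _ hvT)
    have hcardST : (S ∪ T).card = S.card + T.card := Finset.card_union_of_disjoint hST
    have hle := hTmax (S ∪ T) ⟨?_, ?_, ?_⟩
    · have := Finset.card_pos.mpr hSne
      omega
    · intro v hv
      rcases Finset.mem_union.mp hv with hv | hv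
      · exact ⟨(hS v hv).1, fun hE => (hS v hv).2 (Finset.mem_union_left _ hE)⟩
      · exact hT1 v hv
    · omega
    · have hss : (S ∪ T).biUnion (fun v => availC G f' v \ X) ⊆
          S.biUnion (fun v => availC G f' v \ X') ∪ T.biUnion (fun v => availC G f' v \ X) := by
        intro d hd
        rw [Finset.mem_union]
        by_cases hdT : d ∈ T.biUnion (fun v => availC G f' v \ X)
        · exact Or.inr hdT
        · left
          obtain ⟨v, hv, hdv⟩ := Finset.mem_biUnion.mp hd
          rcases Finset.mem_union.mp hv with hv | hv
          · refine Finset.mem_biUnion.mpr ⟨v, hv, ?_⟩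
            rw [Finset.mem_sdiff] at hdv ⊢
            refine ⟨hdv.1, ?_⟩
            rw [hX', Finset.mem_union]
            push Not
            exact ⟨hdv.2, hdT⟩
          · exact absurd (Finset.mem_biUnion.mpr ⟨v, hv, hdv⟩) hdT
      have := (Finset.card_le_card hss).trans (Finset.card_union_le _ _)
      rw [hcardST, Nat.mul_add]
      omega
  · intro v hv hvn
    by_cases hvT : v ∈ T
    · simp only [if_pos hvT]
      obtain ⟨ha, hb⟩ := hY1 v hvT
      refine ⟨fun d hd => (Finset.mem_sdiff.mp (ha hd)).1, fun d hd => ?_, by omega⟩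
      exact Finset.mem_union_right _ (Finset.mem_biUnion.mpr ⟨v, hvT, ha hd⟩)
    · simp only [if_neg hvT]
      have hvE : v ∈ E := (Finset.mem_union.mp hv).resolve_right hvT
      obtain ⟨ha, hb, hc⟩ := h5 v hvE (hnone v hvn)
      refine ⟨fun d hd => hsup v ?_, fun d hd => ?_, ?_⟩
      · rw [Finset.mem_erase] at hd ⊢
        exact ⟨hd.1, ha hd.2⟩
      · exact Finset.mem_union_left _ (hb (Finset.mem_of_mem_erase hd))
      · by_cases hcZ : c ∈ Z v
        · rw [if_pos (hu0 v hvE (hnone v hvn) hcZ), Finset.card_erase_of_mem hcZ]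
          omega
        · rw [Finset.erase_eq_of_notMem hcZ]
          omega
  · intro u hu v hv hun hvn huv
    have hold : ∀ u ∈ E, f' u = none → ∀ v ∈ T, Disjoint ((Z u).erase c) (Y v) := by
      intro u hu hun v hv
      rw [Finset.disjoint_left]
      intro d hd hd'
      exact (Finset.mem_sdiff.mp ((hY1 v hv).1 hd')).2
        ((h5 u hu (hnone u hun)).2.1 (Finset.mem_of_mem_erase hd))
    by_cases huT : u ∈ T <;> by_cases hvT : v ∈ T
    · simp only [if_pos huT, if_pos hvT]
      exact hY2 u huT v hvT huv
    · simp only [if_pos huT, if_neg hvT]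
      exact (hold v ((Finset.mem_union.mp hv).resolve_right hvT) hvn u huT).symm
    · simp only [if_neg huT, if_pos hvT]
      exact hold u ((Finset.mem_union.mp hu).resolve_right huT) hun v hvT
    · simp only [if_neg huT, if_neg hvT]
      exact (h6 u ((Finset.mem_union.mp hu).resolve_right huT) v
        ((Finset.mem_union.mp hv).resolve_right hvT) (hnone u hun) (hnone v hvn) huv).mono
        (Finset.erase_subset _ _) (Finset.erase_subset _ _)

theorem makerWins_of_expansion {V : Type*} [Fintype V] [DecidableEq V] [Nonempty V] {k : ℕ}
    {G : SimpleGraph V} {θ γ : ℕ} (hk : θ * (γ + 1) < k)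
    (hθ : (Fintype.card V : ℝ) < (4 / 3 : ℝ) ^ (θ - 2))
    (HG : ∀ (f : V → Option (Fin k)) (X : Finset (Fin k)), X.card ≤ θ * (γ + 1) →
      ∀ S : Finset V, (∀ v ∈ S, availC G f v ⊆ X) → S.card ≤ γ) : MakerWins G k := by
  classical
  let GM : (V → Option (Fin k)) → Prop := fun f => ∃ h, GInv G θ γ f h ∧
    ∑ v ∈ Finset.univ.filter (fun v => f v = none), (4 / 3 : ℝ) ^ (h v) ≤ Fintype.card V
  let GB : (V → Option (Fin k)) → Prop := fun f =>
    (∀ v, f v = none → ∃ c, LegalMove G f v c) ∧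
      ∀ v c, LegalMove G f v c → GM (Function.update f v (some c))
  refine makerWins_of_invariant (by omega) G GM GB ?_ ?_ (fun f hf => hf)
  · refine ⟨fun _ => 0, ⟨∅, ∅, fun _ => ∅, by simp, by simp, by simp, ?_, by simp, by simp⟩, by simp⟩
    intro S hS _ hc
    have : (S.biUnion (fun v => availC G (fun _ => (none : Option (Fin k))) v \ ∅)) = Finset.univ := by
      ext d
      obtain ⟨v, hv⟩ := hS
      simp only [Finset.mem_biUnion, Finset.mem_univ, iff_true]
      exact ⟨v, hv, by simp [mem_availC]⟩
    rw [this, Finset.card_univ, Fintype.card_fin]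
    refine lt_of_le_of_lt (Nat.mul_le_mul_left _ ?_) hk
    simpa using hc
  · rintro f ⟨h, hI, hsum⟩ ⟨v0, hv0⟩
    set U := Finset.univ.filter (fun v => f v = none) with hU
    obtain ⟨x, hxU, hxmax⟩ := Finset.exists_max_image U h ⟨v0, by simpa [hU] using hv0⟩
    have hxn : f x = none := by simpa [hU] using hxU
    have hsmall : ∀ v, f v = none → h v + 1 < θ := by
      intro v hv
      have h1 : (4 / 3 : ℝ) ^ (h v) ≤ Fintype.card V :=
        (Finset.single_le_sum (f := fun v => (4 / 3 : ℝ) ^ (h v)) (fun _ _ => by positivity)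
          (by simpa [hU] using hv)).trans hsum
      have h2 := lt_of_le_of_lt h1 hθ
      have := (pow_lt_pow_iff_right₀ (by norm_num : (1 : ℝ) < 4 / 3)).mp h2
      omega
    obtain ⟨c, hc⟩ := hI.legal x hxn (by have := hsmall x hxn; omega)
    refine ⟨x, c, hc, ?_⟩
    obtain ⟨u1, hI1⟩ := hI.move HG x c hc
    set f1 := Function.update f x (some c) with hf1
    have hf1n : ∀ v, f1 v = none → v ≠ x ∧ f v = none := by
      intro v hv
      by_cases hvx : v = x
      · subst hvx; simp [hf1] at hv
      · exact ⟨hvx, by simpa [hf1, hvx] using hv⟩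
    refine ⟨?_, ?_⟩
    · intro v hv
      refine hI1.legal v hv ?_
      have := hsmall v (hf1n v hv).2
      split_ifs <;> omega
    · intro w d hd
      obtain ⟨u2, hI2⟩ := hI1.move HG w d hd
      refine ⟨_, hI2, ?_⟩
      set f2 := Function.update f1 w (some d) with hf2
      have hss : Finset.univ.filter (fun v => f2 v = none) ⊆ U.erase x := by
        intro v hv
        simp only [Finset.mem_filter, Finset.mem_univ, true_and] at hv
        have hv1 : f1 v = none := by
          by_cases hvw : v = w
          · subst hvw; exact hd.1
          · simpa [hf2, hvw] using hv
        have := hf1n v hv1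
        simp [hU, this.1, this.2]
      have hone : ∀ u, ∑ v ∈ U.erase x, (4 / 3 : ℝ) ^ (h v) * (if v = u then 1 else 0)
          ≤ (4 / 3 : ℝ) ^ (h x) := by
        intro u
        simp only [mul_ite, mul_one, mul_zero]
        rw [Finset.sum_ite_eq']
        split_ifs with hu
        · exact pow_le_pow_right₀ (by norm_num) (hxmax u (Finset.mem_of_mem_erase hu))
        · positivity
      calc ∑ v ∈ Finset.univ.filter (fun v => f2 v = none),
            (4 / 3 : ℝ) ^ (h v + (if v = u1 then 1 else 0) + (if v = u2 then 1 else 0))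
          ≤ ∑ v ∈ U.erase x,
            (4 / 3 : ℝ) ^ (h v + (if v = u1 then 1 else 0) + (if v = u2 then 1 else 0)) :=
            Finset.sum_le_sum_of_subset_of_nonneg hss (fun _ _ _ => by positivity)
        _ ≤ ∑ v ∈ U.erase x, ((4 / 3 : ℝ) ^ (h v)
              + 1 / 2 * ((4 / 3 : ℝ) ^ (h v) * (if v = u1 then 1 else 0))
              + 1 / 2 * ((4 / 3 : ℝ) ^ (h v) * (if v = u2 then 1 else 0))) := by
            refine Finset.sum_le_sum (fun v _ => ?_)
            have hp : (0 : ℝ) < (4 / 3 : ℝ) ^ (h v) := by positivity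
            split_ifs <;> simp only [pow_add, pow_one, add_zero] <;> nlinarith
        _ ≤ ∑ v ∈ U.erase x, (4 / 3 : ℝ) ^ (h v) + (4 / 3 : ℝ) ^ (h x) := by
            rw [Finset.sum_add_distrib, Finset.sum_add_distrib, ← Finset.mul_sum, ← Finset.mul_sum]
            have := hone u1
            have := hone u2
            linarith
        _ = ∑ v ∈ U, (4 / 3 : ℝ) ^ (h v) := Finset.sum_erase_add _ _ hxU
        _ ≤ _ := hsum


theorem bernoulliBool_prob {p : ℝ} (h0 : 0 ≤ p) (h1 : p ≤ 1) :
    IsProbabilityMeasure (bernoulliBool p) := by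
  constructor
  simp only [bernoulliBool, Measure.add_apply, Measure.smul_apply, measure_univ, smul_eq_mul, mul_one]
  rw [← ENNReal.ofReal_add h0 (by linarith)]
  simp

theorem bernoulliBool_false {p : ℝ} :
    bernoulliBool p {false} = ENNReal.ofReal (1 - p) := by
  simp [bernoulliBool]

theorem erMeasure_prob {n : ℕ} {p : ℝ} (h0 : 0 ≤ p) (h1 : p ≤ 1) :
    IsProbabilityMeasure (erMeasure n p) := by
  have := bernoulliBool_prob h0 h1
  unfold erMeasure
  infer_instance

theorem er_block {n : ℕ} {p : ℝ} (h0 : 0 ≤ p) (h1 : p ≤ 1) (D : Finset (EdgeIdx n)) :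
    (erMeasure n p).real {ω | ∃ e ∈ D, ω e = true} = 1 - (1 - p) ^ D.card := by
  classical
  have := bernoulliBool_prob h0 h1
  have := erMeasure_prob (n := n) h0 h1
  have hc : {ω : EdgeIdx n → Bool | ∃ e ∈ D, ω e = true} =
      (Set.univ.pi (fun e => if e ∈ D then {false} else Set.univ))ᶜ := by
    ext ω
    simp only [Set.mem_ofPred_eq, Set.mem_compl_iff, Set.mem_pi, Set.mem_univ, true_imp_iff]
    push Not
    constructor
    · rintro ⟨e, he, h⟩
      exact ⟨e, by simp [he, h]⟩
    · rintro ⟨e, h⟩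
      by_cases he : e ∈ D
      · exact ⟨e, he, by simpa [he] using h⟩
      · simp [he] at h
  rw [hc, probReal_compl_eq_one_sub MeasurableSet.of_discrete]
  congr 1
  rw [measureReal_def, erMeasure, Measure.pi_pi]
  have : ∀ e : EdgeIdx n, bernoulliBool p (if e ∈ D then {false} else Set.univ) =
      if e ∈ D then ENNReal.ofReal (1 - p) else 1 := by
    intro e
    split_ifs
    · exact bernoulliBool_false
    · exact measure_univ
  simp only [this]
  rw [Finset.prod_ite_mem, Finset.univ_inter, Finset.prod_const, ENNReal.toReal_pow,
    ENNReal.toReal_ofReal (by linarith)]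

theorem er_blocks_aux {n : ℕ} {p : ℝ} (h0 : 0 ≤ p) (h1 : p ≤ 1) {J : Type*}
    (D : J → Finset (EdgeIdx n)) (hD : ∀ i j, i ≠ j → Disjoint (D i) (D j)) (T : Finset J) :
    (erMeasure n p).real {ω | ∀ j ∈ T, ∃ e ∈ D j, ω e = true} =
      ∏ j ∈ T, (1 - (1 - p) ^ (D j).card) := by
  classical
  have := bernoulliBool_prob h0 h1
  have := erMeasure_prob (n := n) h0 h1
  have hi : ProbabilityTheory.iIndepFun (fun (e : EdgeIdx n) (ω : EdgeIdx n → Bool) => ω e)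
      (erMeasure n p) :=
    ProbabilityTheory.iIndepFun_pi (X := fun _ => id) (fun _ => aemeasurable_id)
  induction T using Finset.induction_on with
  | empty => simp
  | insert a s ha ih =>
    have hdis : Disjoint (D a) (s.biUnion D) := by
      rw [Finset.disjoint_biUnion_right]
      intro j hj
      exact hD a j (fun h => ha (h ▸ hj))
    have hj := ProbabilityTheory.iIndepFun.indepFun_finset (D a) (s.biUnion D) hdis hi
      (fun e => measurable_pi_apply e)
    have hm := hj.measure_inter_preimage_eq_mul {x : D a → Bool | ∃ e, x e = true}
      {x : (↥(s.biUnion D)) → Bool | ∀ j ∈ s, ∃ e, e.1 ∈ D j ∧ x e = true}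
      MeasurableSet.of_discrete MeasurableSet.of_discrete
    have hs1 : ((fun (ω : EdgeIdx n → Bool) (i : D a) => ω i) ⁻¹'
        {x : D a → Bool | ∃ e, x e = true}) = {ω | ∃ e ∈ D a, ω e = true} := by
      ext ω
      constructor
      · rintro ⟨e, he⟩
        exact ⟨e.1, e.2, he⟩
      · rintro ⟨e, he, h⟩
        exact ⟨⟨e, he⟩, h⟩
    have hs2 : ((fun (ω : EdgeIdx n → Bool) (i : ↥(s.biUnion D)) => ω i) ⁻¹'
        {x : (↥(s.biUnion D)) → Bool | ∀ j ∈ s, ∃ e, e.1 ∈ D j ∧ x e = true}) =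
        {ω | ∀ j ∈ s, ∃ e ∈ D j, ω e = true} := by
      ext ω
      constructor
      · intro h j hj
        obtain ⟨e, he, h⟩ := h j hj
        exact ⟨e.1, he, h⟩
      · intro h j hj
        obtain ⟨e, he, h⟩ := h j hj
        exact ⟨⟨e, Finset.mem_biUnion.mpr ⟨j, hj, he⟩⟩, he, h⟩
    have he : {ω : EdgeIdx n → Bool | ∀ j ∈ insert a s, ∃ e ∈ D j, ω e = true} =
        {ω | ∃ e ∈ D a, ω e = true} ∩ {ω | ∀ j ∈ s, ∃ e ∈ D j, ω e = true} := by
      ext ω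
      exact Finset.forall_mem_insert _ _ _
    rw [hs1, hs2] at hm
    rw [he, measureReal_def, hm, ENNReal.toReal_mul, ← measureReal_def, ← measureReal_def, ih,
      er_block h0 h1, Finset.prod_insert ha]

theorem er_blocks {n : ℕ} {p : ℝ} (h0 : 0 ≤ p) (h1 : p ≤ 1) {J : Type*} [Fintype J]
    (D : J → Finset (EdgeIdx n)) (hD : ∀ i j, i ≠ j → Disjoint (D i) (D j)) :
    (erMeasure n p).real {ω | ∀ j, ∃ e ∈ D j, ω e = true} = ∏ j, (1 - (1 - p) ^ (D j).card) := by
  have := er_blocks_aux h0 h1 D hD Finset.univ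
  simpa only [Finset.mem_univ, true_imp_iff] using this

theorem sum_exp_lower {C : Type*} (Y : Finset C) (x : C → ℝ) (x0 : ℝ)
    (h : ∑ c ∈ Y, x c ≤ Y.card * x0) :
    Y.card * Real.exp (-x0) ≤ ∑ c ∈ Y, Real.exp (-x c) := by
  have h1 : ∀ c ∈ Y, Real.exp (-x0) * (1 + (x0 - x c)) ≤ Real.exp (-x c) := by
    intro c _
    have h2 := Real.add_one_le_exp (x0 - x c)
    have h3 : Real.exp (-x c) = Real.exp (-x0) * Real.exp (x0 - x c) := by
      rw [← Real.exp_add]; congr 1; ring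
    rw [h3]
    exact mul_le_mul_of_nonneg_left (by linarith) (Real.exp_pos _).le
  refine le_trans ?_ (Finset.sum_le_sum h1)
  rw [← Finset.mul_sum, Finset.sum_add_distrib, Finset.sum_sub_distrib]
  simp only [Finset.sum_const, nsmul_eq_mul, mul_one]
  have := Real.exp_pos (-x0)
  nlinarith

theorem er_single {n k : ℕ} {p : ℝ} (h0 : 0 < p) (h1 : p < 1) (f : Fin n → Option (Fin k))
    (X : Finset (Fin k)) (S : Finset (Fin n)) (m : ℕ) (x0 : ℝ) (hx0 : 0 ≤ x0)
    (hm : m + X.card + S.card ≤ k)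
    (hx : n * Real.log (1 / (1 - p)) ≤ m * x0) :
    (erMeasure n p).real {ω | ∀ v ∈ S, availC (erGraph n ω) f v ⊆ X} ≤
      Real.exp (-(S.card * (m * Real.exp (-x0)))) := by
  classical
  have := erMeasure_prob (n := n) h0.le h1.le
  let Y : Finset (Fin k) := Finset.univ.filter (fun c => c ∉ X ∧ ∀ v ∈ S, f v ≠ some c)
  have hY : m ≤ Y.card := by
    have hu : (Finset.univ : Finset (Fin k)) ⊆
        Y ∪ X ∪ S.biUnion (fun v => (f v).toFinset) := by
      intro c _
      simp only [Finset.mem_union, Y, Finset.mem_filter, Finset.mem_univ, true_and,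
        Finset.mem_biUnion, Option.mem_toFinset, Option.mem_def]
      by_cases hc : c ∈ X
      · exact Or.inl (Or.inr hc)
      · by_cases hs : ∃ a ∈ S, f a = some c
        · exact Or.inr hs
        · push Not at hs
          exact Or.inl (Or.inl ⟨hc, hs⟩)
    have h2 := Finset.card_le_card hu
    rw [Finset.card_univ, Fintype.card_fin] at h2
    have h3 := Finset.card_union_le (Y ∪ X) (S.biUnion (fun v => (f v).toFinset))
    have h4 := Finset.card_union_le Y X
    have h5 : (S.biUnion (fun v => (f v).toFinset)).card ≤ S.card * 1 := by
      refine Finset.card_biUnion_le_card_mul _ _ _ (fun v _ => ?_)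
      rcases f v with _ | c <;> simp
    omega
  let Cc : Fin k → Finset (Fin n) := fun c => Finset.univ.filter (fun w => f w = some c)
  let D : S × Y → Finset (EdgeIdx n) := fun j => Finset.univ.filter
    (fun e => ∃ w, w ∉ S ∧ f w = some j.2.1 ∧ e.1 = s(j.1.1, w))
  have hDdisj : ∀ i j, i ≠ j → Disjoint (D i) (D j) := by
    rintro ⟨⟨v, hv⟩, ⟨c, hc⟩⟩ ⟨⟨v', hv'⟩, ⟨c', hc'⟩⟩ hij
    rw [Finset.disjoint_left]
    intro e he he'
    simp only [D, Finset.mem_filter, Finset.mem_univ, true_and] at he he'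
    obtain ⟨w, hwS, hwc, hew⟩ := he
    obtain ⟨w', hwS', hwc', hew'⟩ := he'
    rw [hew, Sym2.eq_iff] at hew'
    rcases hew' with ⟨hvv, hww⟩ | ⟨hvw, _⟩
    · apply hij
      subst hvv hww
      rw [hwc] at hwc'
      simpa using hwc'
    · exact hwS' (hvw ▸ hv)
  have hDcard : ∀ j, (D j).card ≤ (Cc j.2.1).card := by
    rintro ⟨⟨v, hv⟩, ⟨c, hc⟩⟩
    have : (D (⟨v, hv⟩, ⟨c, hc⟩)).image Subtype.val ⊆ (Cc c).image (fun w => s(v, w)) := by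
      intro e he
      simp only [D, Finset.mem_image, Finset.mem_filter, Finset.mem_univ, true_and] at he
      obtain ⟨e', ⟨w, _, hwc, hew⟩, rfl⟩ := he
      exact Finset.mem_image.mpr ⟨w, by simpa [Cc] using hwc, hew.symm⟩
    have h2 := Finset.card_le_card this
    rw [Finset.card_image_of_injective _ Subtype.val_injective] at h2
    exact h2.trans Finset.card_image_le
  have hsub : {ω | ∀ v ∈ S, availC (erGraph n ω) f v ⊆ X} ⊆
      {ω | ∀ j, ∃ e ∈ D j, ω e = true} := by
    rintro ω hω ⟨⟨v, hv⟩, ⟨c, hc⟩⟩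
    simp only [Y, Finset.mem_filter, Finset.mem_univ, true_and] at hc
    have hcn : c ∉ availC (erGraph n ω) f v := fun h => hc.1 (hω v hv h)
    rw [mem_availC] at hcn
    push Not at hcn
    obtain ⟨w, hwv, hwc⟩ := hcn
    have hwS : w ∉ S := fun h => hc.2 w h hwc
    have hvw := hwv.symm
    have hd : ¬ (s(v, w) : Sym2 (Fin n)).IsDiag := by
      rw [Sym2.mk_isDiag_iff]; exact hvw.1
    refine ⟨⟨s(v, w), hd⟩, ?_, hvw.2 hd⟩
    simp only [D, Finset.mem_filter, Finset.mem_univ, true_and]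
    exact ⟨w, hwS, hwc, rfl⟩
  set L := Real.log (1 / (1 - p)) with hL
  have hq : 1 - p = Real.exp (-L) := by
    rw [hL, one_div, Real.log_inv, neg_neg, Real.exp_log (by linarith)]
  have hL0 : 0 ≤ L := by
    rw [hL]; apply Real.log_nonneg
    rw [le_div_iff₀ (by linarith)]; linarith
  have hterm : ∀ j : S × Y, 1 - (1 - p) ^ (D j).card ≤
      Real.exp (-Real.exp (-(L * (Cc j.2.1).card))) := by
    intro j
    have h2 : Real.exp (-(L * (Cc j.2.1).card)) = (1 - p) ^ (Cc j.2.1).card := by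
      rw [hq, ← Real.exp_nat_mul]; congr 1; ring
    rw [h2]
    have h3 : (1 - p) ^ (Cc j.2.1).card ≤ (1 - p) ^ (D j).card :=
      pow_le_pow_of_le_one (by linarith) (by linarith) (hDcard j)
    have := Real.add_one_le_exp (-(1 - p) ^ (Cc j.2.1).card)
    linarith
  have hsumC : ∑ c ∈ Y, ((Cc c).card : ℝ) ≤ n := by
    have : (Y.biUnion Cc).card = ∑ c ∈ Y, (Cc c).card := by
      refine Finset.card_biUnion (fun c _ c' _ hcc => ?_)
      show Disjoint (Cc c) (Cc c')
      rw [Finset.disjoint_left]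
      intro w hw hw'
      simp only [Cc, Finset.mem_filter, Finset.mem_univ, true_and] at hw hw'
      rw [hw] at hw'
      exact hcc (by simpa using hw')
    have h2 : (Y.biUnion Cc).card ≤ n := by
      simpa using Finset.card_le_univ (Y.biUnion Cc)
    rw [this] at h2
    exact_mod_cast h2
  have hmY : (m : ℝ) ≤ Y.card := by exact_mod_cast hY
  have hlow := sum_exp_lower Y (fun c => L * (Cc c).card) x0 (by
    rw [← Finset.mul_sum]
    calc L * ∑ c ∈ Y, ((Cc c).card : ℝ) ≤ L * n := mul_le_mul_of_nonneg_left hsumC hL0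
      _ = n * L := mul_comm _ _
      _ ≤ m * x0 := hx
      _ ≤ Y.card * x0 := mul_le_mul_of_nonneg_right hmY hx0)
  calc (erMeasure n p).real {ω | ∀ v ∈ S, availC (erGraph n ω) f v ⊆ X}
      ≤ (erMeasure n p).real {ω | ∀ j, ∃ e ∈ D j, ω e = true} := measureReal_mono hsub (measure_ne_top _ _)
    _ = ∏ j, (1 - (1 - p) ^ (D j).card) := er_blocks h0.le h1.le D hDdisj
    _ ≤ ∏ j : S × Y, Real.exp (-Real.exp (-(L * (Cc j.2.1).card))) := by
        refine Finset.prod_le_prod (fun j _ => ?_) (fun j _ => hterm j)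
        have : (1 - p) ^ (D j).card ≤ 1 := pow_le_one₀ (by linarith) (by linarith)
        linarith
    _ = Real.exp (-(S.card * ∑ c ∈ Y, Real.exp (-(L * (Cc c).card)))) := by
        rw [← Real.exp_sum, Finset.sum_neg_distrib]
        congr 2
        rw [Fintype.sum_prod_type]
        simp only [Finset.sum_const, Finset.card_univ, Fintype.card_coe, nsmul_eq_mul]
        congr 1
        exact Finset.sum_coe_sort Y (fun c => Real.exp (-(L * (Cc c).card)))
    _ ≤ _ := by
        apply Real.exp_le_exp.mpr
        apply neg_le_neg
        refine mul_le_mul_of_nonneg_left ?_ (Nat.cast_nonneg _)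
        exact (mul_le_mul_of_nonneg_right hmY (Real.exp_pos _).le).trans hlow

theorem er_makerWins {n k θ g m : ℕ} {p : ℝ} (hn : 0 < n) (h0 : 0 < p) (h1 : p < 1) (x0 : ℝ)
    (hx0 : 0 ≤ x0) (hg : 0 < g)
    (hθ : (n : ℝ) < (4 / 3 : ℝ) ^ (θ - 2)) (hm0 : 0 < m)
    (hm : m + θ * g + g ≤ k)
    (hx : n * Real.log (1 / (1 - p)) ≤ m * x0) :
    (erMeasure n p).real {ω | ¬ MakerWins (erGraph n ω) k} ≤
      ((k + 1 : ℝ) ^ n * 2 ^ k * 2 ^ n) * Real.exp (-(g * (m * Real.exp (-x0)))) := by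
  classical
  have := erMeasure_prob (n := n) h0.le h1.le
  have : Nonempty (Fin n) := ⟨⟨0, hn⟩⟩
  let I : Finset ((Fin n → Option (Fin k)) × Finset (Fin k) × Finset (Fin n)) :=
    Finset.univ.filter (fun i => i.2.1.card ≤ θ * g ∧ i.2.2.card = g)
  have hsub : {ω | ¬ MakerWins (erGraph n ω) k} ⊆
      ⋃ i ∈ I, {ω | ∀ v ∈ i.2.2, availC (erGraph n ω) i.1 v ⊆ i.2.1} := by
    intro ω hω
    by_contra hcon
    apply hω
    refine makerWins_of_expansion (θ := θ) (γ := g - 1) ?_ (by simpa using hθ) ?_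
    · rw [Nat.sub_add_cancel hg]; omega
    · rw [Nat.sub_add_cancel hg]
      intro f X hX S hS
      by_contra hSc
      obtain ⟨S', hS'S, hS'c⟩ := Finset.exists_subset_card_eq (s := S) (n := g) (by omega)
      apply hcon
      simp only [Set.mem_iUnion]
      exact ⟨(f, X, S'), by simp [I, hX, hS'c], fun v hv => hS v (hS'S hv)⟩
  calc (erMeasure n p).real {ω | ¬ MakerWins (erGraph n ω) k}
      ≤ (erMeasure n p).real (⋃ i ∈ I, {ω | ∀ v ∈ i.2.2, availC (erGraph n ω) i.1 v ⊆ i.2.1}) :=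
        measureReal_mono hsub (measure_ne_top _ _)
    _ ≤ ∑ i ∈ I, (erMeasure n p).real {ω | ∀ v ∈ i.2.2, availC (erGraph n ω) i.1 v ⊆ i.2.1} :=
        measureReal_biUnion_finset_le _ _
    _ ≤ ∑ i ∈ I, Real.exp (-(g * (m * Real.exp (-x0)))) := by
        refine Finset.sum_le_sum (fun i hi => ?_)
        simp only [I, Finset.mem_filter, Finset.mem_univ, true_and] at hi
        have := er_single h0 h1 i.1 i.2.1 i.2.2 m x0 hx0 (by omega) hx
        rwa [hi.2] at this
    _ = I.card * Real.exp (-(g * (m * Real.exp (-x0)))) := by simp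
    _ ≤ _ := by
        refine mul_le_mul_of_nonneg_right ?_ (Real.exp_pos _).le
        have : I.card ≤ (k + 1) ^ n * (2 ^ k * 2 ^ n) := by
          refine (Finset.card_le_univ _).trans (le_of_eq ?_)
          simp [Fintype.card_prod, Fintype.card_option]
        calc (I.card : ℝ) ≤ (((k + 1) ^ n * (2 ^ k * 2 ^ n) : ℕ) : ℝ) := by exact_mod_cast this
          _ = _ := by push_cast; ring


set_option maxHeartbeats 4000000 in
theorem er_final {n : ℕ} {p η ε κ C lg : ℝ} (hη0 : 0 < η) (hε : 0 < ε)
    (hp0 : 0 < p) (hp1 : p ≤ 1 - η) (hκ : κ = ε / (2 + ε)) (hlg : lg = Real.log n)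
    (hlg1 : 1 ≤ lg) (hpb : Real.log (1 / p) ≤ κ / 4 * lg) (hC1 : 40 / ε ≤ C) (hC2 : 5 ≤ C)
    (hC : C * lg ^ 2 ≤ Real.exp (κ / 4 * lg)) (hηl : (1 + ε) * Real.log (1 / η) ≤ 3 / 4 * lg) :
    (erMeasure n p).real {ω : EdgeIdx n → Bool |
          ¬ (gameChromaticNumber (erGraph n ω) : ℝ) ≤
            (1 + ε) * n / (Real.log (n * p) / Real.log (1 / (1 - p)))} ≤ Real.exp (-n) := by
  have hp1' : p < 1 := by linarith
  have hn : 0 < n := by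
    rcases Nat.eq_zero_or_pos n with h | h
    · subst h; simp at hlg; linarith
    · exact h
  have hnR : (0 : ℝ) < n := by exact_mod_cast hn
  have hnexp : (n : ℝ) = Real.exp lg := by rw [hlg, Real.exp_log hnR]
  have hκ0 : 0 < κ := by rw [hκ]; positivity
  have hκ1 : κ < 1 := by rw [hκ, div_lt_one (by linarith)]; linarith
  set M := Real.exp (κ / 4 * lg) with hM
  have hM0 : 0 < M := Real.exp_pos _
  set A := Real.exp ((1 - κ / 2) * lg) with hA
  have hA1 : 1 ≤ A := Real.one_le_exp (mul_nonneg (by linarith) (by linarith))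
  have hAM : A * M ^ 2 = n := by
    rw [hnexp, hA, hM, ← Real.exp_nat_mul, ← Real.exp_add]; congr 1; push_cast; ring
  set L := Real.log (1 / (1 - p)) with hL
  have hLp : p ≤ L := by
    have := Real.one_sub_inv_le_log_of_pos (x := 1 / (1 - p)) (one_div_pos.mpr (by linarith))
    rw [one_div, inv_inv, ← one_div, ← hL] at this
    linarith
  have hLη : L ≤ Real.log (1 / η) := by
    rw [hL]
    apply Real.log_le_log
    · apply one_div_pos.mpr; linarith
    · apply one_div_le_one_div_of_le hη0; linarith
  set l := Real.log (n * p) with hl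
  have hlog1p : Real.log (1 / p) = - Real.log p := by rw [one_div, Real.log_inv]
  have hleq : l = lg + Real.log p := by rw [hl, Real.log_mul hnR.ne' hp0.ne', hlg]
  have hlp0 : Real.log p ≤ 0 := Real.log_nonpos hp0.le hp1'.le
  have hllg : l ≤ lg := by linarith
  have hκlg : κ * lg ≤ lg := by nlinarith
  have hl34 : (1 - κ / 4) * lg ≤ l := by rw [hlog1p] at hpb; linarith
  have hl34' : 3 / 4 * lg ≤ l := by linarith
  have hl0 : 0 < l := by linarith
  have hpM : 1 ≤ p * M := by
    have : p * M = Real.exp (Real.log p + κ / 4 * lg) := by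
      rw [Real.exp_add, Real.exp_log hp0]
    rw [this]
    apply Real.one_le_exp
    linarith
  set R := n * L / l with hR
  have hRbig : A * C * lg ≤ R := by
    rw [hR, le_div_iff₀ hl0]
    calc A * C * lg * l ≤ A * C * lg * lg := by gcongr
      _ = A * (C * lg ^ 2) := by ring
      _ ≤ A * M := by gcongr
      _ ≤ A * M * (p * M) := le_mul_of_one_le_right (by positivity) hpM
      _ = (A * M ^ 2) * p := by ring
      _ = n * p := by rw [hAM]
      _ ≤ n * L := by gcongr
  have hR0 : 0 < R := lt_of_lt_of_le (by positivity) hRbig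
  have hbound : (1 + ε) * n / (l / L) = (1 + ε) * R := by
    rw [hR, div_div_eq_mul_div]; ring
  rw [hbound]
  set k := ⌊(1 + ε) * R⌋₊ with hk
  have hkle : (k : ℝ) ≤ (1 + ε) * R := Nat.floor_le (by positivity)
  have hkn : (k : ℝ) ≤ n := by
    refine hkle.trans ?_
    rw [hR, ← mul_div_assoc, div_le_iff₀ hl0]
    have : (1 + ε) * L ≤ l :=
      (mul_le_mul_of_nonneg_left hLη (by linarith)).trans (hηl.trans hl34')
    nlinarith
  set g := ⌈A⌉₊ with hg
  have hgA : A ≤ g := Nat.le_ceil _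
  have hgA2 : (g : ℝ) ≤ 2 * A := by
    have := Nat.ceil_lt_add_one (a := A) (by linarith)
    linarith
  have hg0 : 0 < g := Nat.ceil_pos.mpr (by linarith)
  set t := ⌈4 * lg⌉₊ with ht
  have htl : 4 * lg ≤ t := Nat.le_ceil _
  have htu : (t : ℝ) ≤ 4 * lg + 1 := (Nat.ceil_lt_add_one (by linarith)).le
  set m := ⌈(1 + ε / 2) * R⌉₊ with hm
  have hml : (1 + ε / 2) * R ≤ m := Nat.le_ceil _
  have hmu : (m : ℝ) ≤ (1 + ε / 2) * R + 1 := (Nat.ceil_lt_add_one (by positivity)).le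
  have hm0 : 0 < m := Nat.ceil_pos.mpr (by positivity)
  set x0 := (1 - κ) * l with hx0
  have hκ' : (1 + ε / 2) * (1 - κ) = 1 := by
    rw [hκ]; field_simp; ring
  have hθ : (n : ℝ) < (4 / 3 : ℝ) ^ (t + 3 - 2) := by
    have h1 : t + 3 - 2 = t + 1 := by omega
    rw [h1, ← Real.log_lt_log_iff hnR (by positivity), Real.log_pow, ← hlg]
    have := Real.one_sub_inv_le_log_of_pos (x := (4 / 3 : ℝ)) (by norm_num)
    push_cast
    have h3 : (1 / 4 : ℝ) ≤ Real.log (4 / 3) := by norm_num at this ⊢; linarith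
    nlinarith
  have hmk : m + (t + 3) * g + g ≤ k := by
    rw [hk]
    apply Nat.le_floor
    push_cast
    have h1 : ((t : ℝ) + 4) * g ≤ (9 * lg) * (2 * A) := by
      apply mul_le_mul _ hgA2 (by positivity) (by positivity)
      linarith
    have h2 : ε / 2 * (A * C * lg) ≤ ε / 2 * R := by gcongr
    have h3 : 40 ≤ C * ε := by rwa [div_le_iff₀ hε] at hC1
    have h4 : 1 ≤ A * lg := by nlinarith
    have h5 : 20 * (A * lg) ≤ ε / 2 * (A * C * lg) := by
      have : ε / 2 * (A * C * lg) = (C * ε / 2) * (A * lg) := by ring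
      rw [this]
      apply mul_le_mul_of_nonneg_right _ (by positivity)
      linarith
    nlinarith
  have hx : n * Real.log (1 / (1 - p)) ≤ m * x0 := by
    rw [← hL]
    calc n * L = R * l := by rw [hR]; field_simp
      _ = ((1 + ε / 2) * (1 - κ)) * (R * l) := by rw [hκ', one_mul]
      _ = ((1 + ε / 2) * R) * x0 := by rw [hx0]; ring
      _ ≤ m * x0 := mul_le_mul_of_nonneg_right hml (mul_nonneg (by linarith) hl0.le)
  have hmain := er_makerWins hn hp0 hp1' x0 (mul_nonneg (by linarith) hl0.le) hg0 hθ hm0 hmk hx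
  have := erMeasure_prob (n := n) hp0.le hp1'.le
  refine (measureReal_mono (s₂ := {ω | ¬ MakerWins (erGraph n ω) k}) ?_
    (measure_ne_top _ _)).trans (hmain.trans ?_)
  · intro ω hω hw
    apply hω
    refine le_trans ?_ hkle
    exact_mod_cast Nat.sInf_le hw
  have hn1 : (1 : ℝ) ≤ n := by exact_mod_cast hn
  have hpre : ((k + 1 : ℝ) ^ n * 2 ^ k * 2 ^ n) ≤ Real.exp (n * (4 * lg)) := by
    have h1 : (k + 1 : ℝ) ≤ 2 * n := by linarith
    have hkn' : k ≤ n := by exact_mod_cast hkn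
    calc ((k + 1 : ℝ) ^ n * 2 ^ k * 2 ^ n) ≤ (2 * n) ^ n * 2 ^ n * 2 ^ n := by
          gcongr
          norm_num
      _ = (8 * n : ℝ) ^ n := by rw [← mul_pow, ← mul_pow]; congr 1; ring
      _ ≤ (Real.exp (4 * lg)) ^ n := by
          gcongr
          have h2 : (8 : ℝ) ≤ Real.exp (3 * lg) := by
            have h3 : (2 : ℝ) ≤ Real.exp lg := by
              have := Real.add_one_le_exp lg; linarith
            calc (8 : ℝ) = 2 ^ 3 := by norm_num
              _ ≤ (Real.exp lg) ^ 3 := by gcongr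
              _ = Real.exp (3 * lg) := by rw [← Real.exp_nat_mul]; norm_num
          calc (8 * n : ℝ) ≤ Real.exp (3 * lg) * n := by gcongr
            _ = Real.exp (4 * lg) := by rw [hnexp, ← Real.exp_add]; congr 1; ring
      _ = _ := by rw [← Real.exp_nat_mul]
  have hexpo : n * (5 * lg) ≤ g * (m * Real.exp (-x0)) := by
    have h1 : Real.exp (κ * l) / lg ≤ m * Real.exp (-x0) := by
      have h2 : Real.exp l = n * p := by rw [hl, Real.exp_log (by positivity)]
      have h3 : Real.exp l / lg ≤ m := by
        rw [h2]
        calc n * p / lg ≤ n * L / l := by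
              gcongr
              exact mul_nonneg hnR.le (hp0.le.trans hLp)
          _ = R := rfl
          _ ≤ (1 + ε / 2) * R := by nlinarith
          _ ≤ m := hml
      calc Real.exp (κ * l) / lg = Real.exp l / lg * Real.exp (-x0) := by
            rw [div_mul_eq_mul_div, ← Real.exp_add, hx0]; congr 2; ring
        _ ≤ _ := by gcongr
    have h4 : M ^ 3 ≤ Real.exp (κ * l) := by
      rw [hM, ← Real.exp_nat_mul]
      apply Real.exp_le_exp.mpr
      push_cast
      nlinarith
    calc n * (5 * lg) = A * M ^ 2 * ((5 * lg ^ 2) / lg) := by rw [hAM]; field_simp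
      _ ≤ A * M ^ 2 * (M / lg) := by
          gcongr
          refine le_trans ?_ hC
          gcongr
      _ = A * (M ^ 3 / lg) := by ring
      _ ≤ A * (Real.exp (κ * l) / lg) := by gcongr
      _ ≤ g * (m * Real.exp (-x0)) := by gcongr
  calc ((k + 1 : ℝ) ^ n * 2 ^ k * 2 ^ n) * Real.exp (-(g * (m * Real.exp (-x0))))
      ≤ Real.exp (n * (4 * lg)) * Real.exp (-(n * (5 * lg))) := by
        gcongr
    _ = Real.exp (-(n * lg)) := by rw [← Real.exp_add]; congr 1; ring
    _ ≤ Real.exp (-n) := by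
        apply Real.exp_le_exp.mpr
        nlinarith

/-- Theorem 2 of Keusch–Steger. For `p(n) ≤ 1 - η` with
`p(n) ≥ e^{-o(log n)}`, with high probability the game chromatic number of
`G(n, p(n))` is at most `(1 + ε) · n / log_b(np)` where `b = 1/(1-p)`. -/
theorem game_chromatic_number_upper_bound_whp
    (η : ℝ) (hη0 : 0 < η) (hη1 : η < 1)
    (p : ℕ → ℝ) (hp0 : ∀ n, 0 < p n) (hp1 : ∀ n, p n ≤ 1 - η)
    (hpbig : Tendsto (fun n => Real.log (1 / p n) / Real.log n) atTop (nhds 0))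
    (ε : ℝ) (hε : 0 < ε) :
    Tendsto (fun n =>
        erMeasure n (p n) {ω : EdgeIdx n → Bool |
          (gameChromaticNumber (erGraph n ω) : ℝ) ≤
            (1 + ε) * n / (Real.log (n * p n) / Real.log (1 / (1 - p n)))})
      atTop (nhds 1) := by
  obtain ⟨κ, hκ⟩ : ∃ κ, κ = ε / (2 + ε) := ⟨_, rfl⟩
  have hκ0 : 0 < κ := by rw [hκ]; positivity
  have hlogT : Tendsto (fun n : ℕ => Real.log n) atTop atTop :=
    Real.tendsto_log_atTop.comp tendsto_natCast_atTop_atTop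
  set C := max (40 / ε) 5 with hCdef
  have hCpos : 0 < C := lt_of_lt_of_le (by norm_num) (le_max_right _ _)
  have e1 : ∀ᶠ n : ℕ in atTop, 1 ≤ Real.log n := hlogT.eventually_ge_atTop 1
  have e2 : ∀ᶠ n : ℕ in atTop, Real.log (1 / p n) / Real.log n < κ / 4 :=
    hpbig.eventually_lt_const (by positivity)
  have e3 : ∀ᶠ n : ℕ in atTop, C * Real.log n ^ 2 ≤ Real.exp (κ / 4 * Real.log n) := by
    have h := isLittleO_pow_exp_pos_mul_atTop 2 (b := κ / 4) (by positivity)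
    have h2 := (h.bound (c := 1 / C) (by positivity))
    filter_upwards [hlogT.eventually h2] with n hn
    rw [Real.norm_of_nonneg (by positivity), Real.norm_of_nonneg (by positivity)] at hn
    calc C * Real.log n ^ 2 ≤ C * (1 / C * Real.exp (κ / 4 * Real.log n)) := by gcongr
      _ = _ := by field_simp
  have e4 : ∀ᶠ n : ℕ in atTop, (1 + ε) * Real.log (1 / η) ≤ 3 / 4 * Real.log n := by
    filter_upwards [hlogT.eventually_ge_atTop (4 / 3 * ((1 + ε) * Real.log (1 / η)))] with n hn
    linarith
  have hlow : Tendsto (fun n : ℕ => 1 - ENNReal.ofReal (Real.exp (-(n : ℝ)))) atTop (nhds 1) := by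
    have h1 : Tendsto (fun n : ℕ => Real.exp (-(n : ℝ))) atTop (nhds 0) :=
      Real.tendsto_exp_neg_atTop_nhds_zero.comp tendsto_natCast_atTop_atTop
    have h2 := ENNReal.tendsto_ofReal h1
    rw [ENNReal.ofReal_zero] at h2
    have h3 := ENNReal.Tendsto.sub (tendsto_const_nhds (x := (1 : ENNReal))) h2
      (Or.inl ENNReal.one_ne_top)
    simpa using h3
  refine tendsto_of_tendsto_of_tendsto_of_le_of_le' hlow tendsto_const_nhds ?_ ?_
  · filter_upwards [e1, e2, e3, e4] with n h1 h2 h3 h4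
    have hprob := erMeasure_prob (n := n) (hp0 n).le (by linarith [hp1 n] : p n ≤ 1)
    have h5 := er_final hη0 hε (hp0 n) (hp1 n) hκ rfl h1
      ((div_lt_iff₀ (by linarith)).mp h2).le (le_max_left _ _) (le_max_right _ _) h3 h4
    have h6 := ENNReal.ofReal_le_ofReal h5
    rw [measureReal_def, ENNReal.ofReal_toReal (measure_ne_top _ _)] at h6
    have h7 := prob_compl_eq_one_sub (μ := erMeasure n (p n))
      (s := {ω : EdgeIdx n → Bool | ¬ (gameChromaticNumber (erGraph n ω) : ℝ) ≤
            (1 + ε) * n / (Real.log (n * p n) / Real.log (1 / (1 - p n)))})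
      MeasurableSet.of_discrete
    have h8 : ({ω : EdgeIdx n → Bool | ¬ (gameChromaticNumber (erGraph n ω) : ℝ) ≤
            (1 + ε) * n / (Real.log (n * p n) / Real.log (1 / (1 - p n)))})ᶜ =
        {ω : EdgeIdx n → Bool | (gameChromaticNumber (erGraph n ω) : ℝ) ≤
            (1 + ε) * n / (Real.log (n * p n) / Real.log (1 / (1 - p n)))} := by
      ext ω
      exact not_not
    rw [h8] at h7
    rw [h7]
    exact tsub_le_tsub_left h6 1
  · filter_upwards with n
    have hprob := erMeasure_prob (n := n) (hp0 n).le (by linarith [hp1 n] : p n ≤ 1)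
    exact prob_le_one
end

section
/- Let q, d, z ∈ ℕ with z ≥ 1, let A_1, …, A_k be pairwise disjoint finite sets, and define f(1,q,d) := zq + d and f(m,q,d) := (zq + d)·m·(1 + ∑_{i=1}^{m−1} 1/i) for m > 1. Suppose that ∑_{i∈I} |A_i| > f(|I|, q, d) for every nonempty subset I ⊆ {1, …, k}. Then in every play of the box game B(A_1, …, A_k; q, z) in which the index removed at every step t with t ≡ 1 (mod z) is chosen d-greedily, every surviving set remains nonempty throughout the play; in particular Maker wins the box game by playing d-greedily. -/
open Finset

/-- Lemma 4 of Keusch–Steger, the generalized box game.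
Given pairwise disjoint sets `A 0, …, A (k-1)` whose partial sums satisfy
`∑_{i ∈ I} |A i| > f(|I|, q, d)` with
`f(m,q,d) = (zq+d)·m·(1 + ∑_{i=1}^{m-1} 1/i)`, in every play of the box game
`B(A_1, …, A_k; q, z)` in which Maker's real moves (steps `t ≡ 0 (mod z)`,
`0`-indexed) are chosen `d`-greedily, every surviving set stays nonempty;
in particular Maker wins by playing `d`-greedily. -/
theorem box_game_maker_wins
    {α : Type*} [DecidableEq α] (k q d z : ℕ) (hz : 1 ≤ z)
    (A : Fin k → Finset α)
    (hdisj : ∀ i j : Fin k, i ≠ j → Disjoint (A i) (A j))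
    (hsum : ∀ I : Finset (Fin k), I.Nonempty →
      ((z * q + d : ℝ)) * I.card *
          (1 + ∑ i ∈ Finset.range (I.card - 1), (1 : ℝ) / (i + 1)) <
        ∑ i ∈ I, ((A i).card : ℝ))
    -- a play of the box game:
    (I : ℕ → Finset (Fin k)) (A' : ℕ → Fin k → Finset α) (j : ℕ → Fin k)
    (hI0 : I 0 = Finset.univ) (hA'0 : A' 0 = A)
    -- in step `t`, the chosen index `j t` is removed from `I t` ...
    (hjmem : ∀ t < k, j t ∈ I t)
    (hIstep : ∀ t < k, I (t + 1) = (I t).erase (j t))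
    -- ... and then Breaker deletes at most `q` elements from the surviving sets
    (hsub : ∀ t < k, ∀ i ∈ I (t + 1), A' (t + 1) i ⊆ A' t i)
    (hdel : ∀ t < k, ∑ i ∈ I (t + 1), ((A' t i).card - (A' (t + 1) i).card) ≤ q)
    -- every `z`-th step is a real Maker move, played `d`-greedily
    (hgreedy : ∀ t < k, t % z = 0 → ∀ i ∈ I t, (A' t (j t)).card ≤ (A' t i).card + d) :
    ∀ t ≤ k, ∀ i ∈ I t, (A' t i).Nonempty := by
  have hanti : ∀ n s, s + n ≤ k → I (s + n) ⊆ I s := by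
    intro n
    induction n with
    | zero => intro s _; exact subset_rfl
    | succ n ih =>
      intro s hs
      have h1 := hIstep (s + n) (by omega)
      rw [← add_assoc, h1]
      exact (Finset.erase_subset _ _).trans (ih s (by omega))
  have hdrop : ∀ n s, s + n ≤ k → ∀ J ⊆ I (s + n),
      ∑ i ∈ J, (A' s i).card ≤ ∑ i ∈ J, (A' (s + n) i).card + n * q := by
    intro n
    induction n with
    | zero => intro s _ J _; simp
    | succ n ih =>
      intro s hs J hJ
      rw [← add_assoc] at hJ ⊢
      have hJ' : J ⊆ I (s + n) := hJ.trans (hanti 1 (s + n) (by omega))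
      have h1 := ih s (by omega) J hJ'
      have h2 := hdel (s + n) (by omega)
      have h3 : ∑ i ∈ J, ((A' (s + n) i).card - (A' (s + n + 1) i).card) ≤ q :=
        (Finset.sum_le_sum_of_subset hJ).trans h2
      have h4 : ∑ i ∈ J, (A' (s + n) i).card ≤
          ∑ i ∈ J, ((A' (s + n) i).card - (A' (s + n + 1) i).card)
            + ∑ i ∈ J, (A' (s + n + 1) i).card := by
        rw [← Finset.sum_add_distrib]
        exact Finset.sum_le_sum fun i _ => by omega
      rw [Nat.succ_mul]
      omega
  have key : ∀ t, t ≤ k → ∀ J ⊆ I t, J.Nonempty →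
      ¬ (∑ i ∈ J, ((A' t i).card : ℝ) ≤ (z * q + d : ℝ) * J.card *
        ∑ i ∈ Finset.range (J.card - 1), (1 : ℝ) / (i + 1)) := by
    intro t
    induction t using Nat.strong_induction_on with
    | _ t ih =>
    intro ht J hJ hne hle
    rcases Nat.eq_zero_or_pos t with h0 | hpos
    · subst h0
      rw [hA'0] at hle
      have h1 := hsum J hne
      have h2 : (0 : ℝ) ≤ (z * q + d : ℝ) * J.card := by positivity
      rw [mul_add] at h1
      linarith
    · obtain ⟨s, n, hsz, hst, hn1, hnz⟩ :
          ∃ s n, s % z = 0 ∧ s + n = t ∧ 1 ≤ n ∧ n ≤ z := by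
        refine ⟨z * ((t - 1) / z), (t - 1) % z + 1, Nat.mul_mod_right _ _, ?_, by omega, ?_⟩
        · have := Nat.div_add_mod (t - 1) z
          omega
        · exact Nat.mod_lt _ hz
      subst hst
      have hJ1 : J ⊆ I (s + 1) := by
        have := hanti (n - 1) (s + 1) (by omega)
        rw [show s + 1 + (n - 1) = s + n by omega] at this
        exact hJ.trans this
      have hJs : J ⊆ I s := hJ.trans (hanti n s ht)
      have hnot : j s ∉ J := by
        intro h
        have := hJ1 h
        rw [hIstep s (by omega)] at this
        simp at this
      refine ih s (by omega) (by omega) (insert (j s) J)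
        (Finset.insert_subset (hjmem s (by omega)) hJs) (Finset.insert_nonempty _ _) ?_
      rw [Finset.sum_insert hnot, Finset.card_insert_of_notMem hnot]
      obtain ⟨m, hm⟩ : ∃ m, J.card = m + 1 := ⟨J.card - 1, by
        have := hne.card_pos
        omega⟩
      have hg : ((m + 1 : ℕ) : ℝ) * ((A' s (j s)).card : ℝ) ≤
          ∑ i ∈ J, ((A' s i).card : ℝ) + ((m + 1 : ℕ) : ℝ) * d := by
        have : ∑ i ∈ J, ((A' s (j s)).card : ℝ) ≤ ∑ i ∈ J, (((A' s i).card : ℝ) + d) :=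
          Finset.sum_le_sum fun i hi => by
            exact_mod_cast hgreedy s (by omega) hsz i (hJs hi)
        rw [Finset.sum_add_distrib] at this
        simpa [hm] using this
      have hd : ∑ i ∈ J, ((A' s i).card : ℝ) ≤
          ∑ i ∈ J, ((A' (s + n) i).card : ℝ) + z * q := by
        have h1 := hdrop n s ht J hJ
        have h2 : n * q ≤ z * q := Nat.mul_le_mul_right _ hnz
        exact_mod_cast h1.trans (by omega)
      rw [hm] at hle ⊢
      simp only [Nat.add_sub_cancel] at hle ⊢
      rw [Finset.sum_range_succ]
      push_cast at *
      generalize ∑ i ∈ Finset.range m, (1 : ℝ) / (i + 1) = H at *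
      generalize ∑ i ∈ J, ((A' s i).card : ℝ) = S at *
      generalize ∑ i ∈ J, ((A' (s + n) i).card : ℝ) = T at *
      generalize ((A' s (j s)).card : ℝ) = a at *
      have hmp : (0 : ℝ) < (m : ℝ) + 1 := by positivity
      have hd0 : (0 : ℝ) ≤ d := by positivity
      have hS : S ≤ (z * q + d : ℝ) * (m + 1) * H + z * q := by linarith
      have e : (z * q + d : ℝ) * (m + 1 + 1) * (H + 1 / (m + 1)) * (m + 1) =
          ((z * q + d : ℝ) * (m + 1) * H + z * q) * (m + 2) + d * (m + 2) := by
        field_simp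
        ring
      refine le_of_mul_le_mul_right ?_ hmp
      rw [e]
      have := mul_le_mul_of_nonneg_right hS (by positivity : (0 : ℝ) ≤ (m : ℝ) + 2)
      nlinarith
  intro t ht i hi
  rw [Finset.nonempty_iff_ne_empty]
  intro he
  refine key t ht {i} (by simpa using hi) (Finset.singleton_nonempty i) ?_
  simp [he]
end

section
/- Let η ∈ (0,1) and α > 1 be constants, set ξ := (1 − 1/α)/10, and let p : ℕ → ℝ satisfy 0 < p(n) ≤ 1 − η and log(1/p(n))/log n → 0. With b := 1/(1 − p(n)), log_b(np) := log(n·p(n))/log b, and d := ⌈(n·p(n))^{1−4ξ}⌉, let 𝒜_n be the event that the random graph G_{n,p(n)} contains pairwise disjoint vertex sets A, C_1, C_2, …, C_d such that |A| ≥ d, |C_i| ≤ (1/α + ξ)·log_b(np) for all i ∈ {1, …, d}, and for all i ∈ {1, …, d} and all v ∈ A the neighborhood of v intersects C_i. Then the probability of 𝒜_n tends to 0 as n → ∞. -/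
open MeasureTheory Filter


open ProbabilityTheory

lemma bb_prob (p : ℝ) (h0 : 0 ≤ p) (h1 : p ≤ 1) : IsProbabilityMeasure (bernoulliBool p) := by
  constructor
  simp only [bernoulliBool, Measure.coe_add, Measure.coe_smul, Pi.add_apply, Pi.smul_apply,
    measure_univ, smul_eq_mul, mul_one]
  rw [← ENNReal.ofReal_add h0 (by linarith)]
  simp

lemma bb_false (p : ℝ) : bernoulliBool p {false} = ENNReal.ofReal (1 - p) := by
  simp [bernoulliBool]

lemma one_block {ι : Type*} [Fintype ι] (p : ℝ) (h0 : 0 ≤ p) (h1 : p ≤ 1)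
    (S : Finset ι) (q : ℝ) (hq : q ≤ (1 - p) ^ S.card) :
    Measure.pi (fun _ : ι => bernoulliBool p) {ω | ∃ e ∈ S, ω e = true}
      ≤ ENNReal.ofReal (1 - q) := by
  have := bb_prob p h0 h1
  have hE : {ω : ι → Bool | ∃ e ∈ S, ω e = true} = (Set.pi (S : Set ι) (fun _ => {false}))ᶜ := by
    ext ω
    simp [Set.mem_pi]
  rw [hE, prob_compl_eq_one_sub (Set.toFinite _).measurableSet, Measure.pi_pi_finset]
  simp only [bb_false, Finset.prod_const]
  rw [← ENNReal.ofReal_pow (by linarith), ← ENNReal.ofReal_one,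
    ← ENNReal.ofReal_sub _ (by have : 0 ≤ 1 - p := by linarith
                               positivity)]
  exact ENNReal.ofReal_le_ofReal (by linarith)

lemma blocks {ι J : Type*} [Fintype ι] (p : ℝ) (h0 : 0 ≤ p) (h1 : p ≤ 1)
    (S : J → Finset ι) (q : ℝ) (hq : ∀ j, q ≤ (1 - p) ^ (S j).card)
    (T : Finset J) (hd : ∀ i ∈ T, ∀ j ∈ T, i ≠ j → Disjoint (S i) (S j)) :
    Measure.pi (fun _ : ι => bernoulliBool p) {ω | ∀ j ∈ T, ∃ e ∈ S j, ω e = true}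
      ≤ ENNReal.ofReal (1 - q) ^ T.card := by
  classical
  have := bb_prob p h0 h1
  induction T using Finset.induction_on with
  | empty => simp
  | insert a T ha ih =>
    have hind : iIndepFun (fun (i : ι) (ω : ι → Bool) => ω i)
        (Measure.pi (fun _ : ι => bernoulliBool p)) :=
      iIndepFun_pi (X := fun _ x => x) (fun _ => aemeasurable_id)
    have hdis : Disjoint (S a) (T.biUnion S) := by
      rw [Finset.disjoint_biUnion_right]
      intro j hj
      exact hd a (by simp) j (by simp [hj]) (by rintro rfl; exact ha hj)
    have h2 := hind.indepFun_finset (S a) (T.biUnion S) hdis (fun i => measurable_pi_apply i)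
    have h3 := h2.measure_inter_preimage_eq_mul
      {x | ∃ e : S a, x e = true}
      {x | ∀ j, ∀ hj : j ∈ T, ∃ e, ∃ he : e ∈ S j,
        x ⟨e, Finset.mem_biUnion.2 ⟨j, hj, he⟩⟩ = true}
      (Set.toFinite _).measurableSet (Set.toFinite _).measurableSet
    have e1 : ((fun (ω : ι → Bool) (i : S a) => ω i) ⁻¹' {x | ∃ e : S a, x e = true})
        = {ω | ∃ e ∈ S a, ω e = true} := by
      ext ω; simp
    have e2 : ((fun (ω : ι → Bool) (i : T.biUnion S) => ω i) ⁻¹'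
        {x | ∀ j, ∀ hj : j ∈ T, ∃ e, ∃ he : e ∈ S j,
        x ⟨e, Finset.mem_biUnion.2 ⟨j, hj, he⟩⟩ = true})
        = {ω | ∀ j ∈ T, ∃ e ∈ S j, ω e = true} := by
      ext ω; simp
    rw [e1, e2] at h3
    have e3 : {ω : ι → Bool | ∀ j ∈ insert a T, ∃ e ∈ S j, ω e = true} =
      {ω | ∃ e ∈ S a, ω e = true} ∩ {ω | ∀ j ∈ T, ∃ e ∈ S j, ω e = true} := by
      ext ω; simp
    rw [e3, h3, Finset.card_insert_of_notMem ha, pow_succ, mul_comm]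
    refine mul_le_mul' (ih ?_) (one_block p h0 h1 _ q (hq a))
    intro i hi j hj
    exact hd i (by simp [hi]) j (by simp [hj])

lemma er_fixed (n d : ℕ) (p : ℝ) (h0 : 0 ≤ p) (h1 : p ≤ 1)
    (A : Finset (Fin n)) (C : Fin d → Finset (Fin n)) (q : ℝ)
    (hAC : ∀ i, Disjoint A (C i)) (hC : ∀ i j, i ≠ j → Disjoint (C i) (C j))
    (hq : ∀ i, q ≤ (1 - p) ^ (C i).card) :
    erMeasure n p {ω | ∀ i, ∀ v ∈ A, ∃ u ∈ C i, (erGraph n ω).Adj v u}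
      ≤ ENNReal.ofReal (1 - q) ^ (A.card * d) := by
  classical
  let S : Fin n × Fin d → Finset (EdgeIdx n) := fun x =>
    ((C x.2).image (fun u => s(x.1, u))).subtype (fun e => ¬ e.IsDiag)
  have hcard : ∀ x, (S x).card ≤ (C x.2).card := by
    intro x
    simp only [S, Finset.card_subtype]
    exact (Finset.card_filter_le _ _).trans Finset.card_image_le
  have key := blocks (J := Fin n × Fin d) p h0 h1 S q
    (fun x => (hq x.2).trans (pow_le_pow_of_le_one (by linarith) (by linarith) (hcard x)))
    (A ×ˢ Finset.univ) (by
      rintro ⟨v, i⟩ hi ⟨w, j⟩ hj hne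
      simp only [Finset.mem_product, Finset.mem_univ, and_true] at hi hj
      rw [Finset.disjoint_left]
      rintro ⟨e, he⟩ h1 h2
      simp only [S, Finset.mem_subtype, Finset.mem_image] at h1 h2
      obtain ⟨u, hu, rfl⟩ := h1
      obtain ⟨u', hu', hh⟩ := h2
      rw [Sym2.eq_iff] at hh
      rcases hh with ⟨rfl, rfl⟩ | ⟨rfl, rfl⟩
      · have hij : i ≠ j := by rintro rfl; exact hne rfl
        exact Finset.disjoint_left.1 (hC i j hij) hu hu'
      · exact Finset.disjoint_left.1 (hAC i) hj hu)
  rw [Finset.card_product, Finset.card_univ, Fintype.card_fin] at key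
  refine le_trans (measure_mono ?_) key
  rintro ω hω ⟨v, i⟩ hv
  simp only [Finset.mem_product, Finset.mem_univ, and_true] at hv
  obtain ⟨u, hu, hne, hadj⟩ := hω i v hv
  have hd : ¬ (s(v, u) : Sym2 (Fin n)).IsDiag := by simpa using hne
  refine ⟨⟨s(v, u), hd⟩, ?_, hadj hd⟩
  simp only [S, Finset.mem_subtype, Finset.mem_image]
  exact ⟨u, hu, rfl⟩

lemma er_union (n d : ℕ) (p K q : ℝ) (h0 : 0 ≤ p) (h1 : p ≤ 1) (hq0 : 0 ≤ q)
    (hq : ∀ m : ℕ, (m : ℝ) ≤ K → q ≤ (1 - p) ^ m) :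
    erMeasure n p {ω | ∃ (A : Finset (Fin n)) (C : Fin d → Finset (Fin n)),
            (∀ i, Disjoint A (C i)) ∧
            (∀ i j, i ≠ j → Disjoint (C i) (C j)) ∧
            d ≤ A.card ∧
            (∀ i, ((C i).card : ℝ) ≤ K) ∧
            (∀ i, ∀ v ∈ A, ∃ u ∈ C i, (erGraph n ω).Adj v u)}
      ≤ ENNReal.ofReal ((2 * (n + 1)) ^ n * Real.exp (-(q * (d * d)))) := by
  classical
  by_cases hdn : d ≤ n
  swap
  · have : {ω : EdgeIdx n → Bool | ∃ (A : Finset (Fin n)) (C : Fin d → Finset (Fin n)),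
            (∀ i, Disjoint A (C i)) ∧
            (∀ i j, i ≠ j → Disjoint (C i) (C j)) ∧
            d ≤ A.card ∧
            (∀ i, ((C i).card : ℝ) ≤ K) ∧
            (∀ i, ∀ v ∈ A, ∃ u ∈ C i, (erGraph n ω).Adj v u)} = ∅ := by
      ext ω
      simp only [Set.mem_ofPred_eq, Set.mem_empty_iff_false, iff_false]
      rintro ⟨A, C, -, -, h, -⟩
      have := Finset.card_le_univ A
      rw [Fintype.card_fin] at this
      omega
    rw [this]; simp
  let Cg : (Fin n → Option (Fin d)) → Fin d → Finset (Fin n) :=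
    fun g i => Finset.univ.filter (fun v => g v = some i)
  let E : Finset (Fin n) × (Fin n → Option (Fin d)) → Set (EdgeIdx n → Bool) := fun x =>
    {ω | (∀ i, Disjoint x.1 (Cg x.2 i)) ∧ d ≤ x.1.card ∧ (∀ i, ((Cg x.2 i).card : ℝ) ≤ K) ∧
      (∀ i, ∀ v ∈ x.1, ∃ u ∈ Cg x.2 i, (erGraph n ω).Adj v u)}
  have hE : ∀ x, erMeasure n p (E x) ≤ ENNReal.ofReal (Real.exp (-(q * (d * d)))) := by
    intro x
    by_cases hx : (∀ i, Disjoint x.1 (Cg x.2 i)) ∧ d ≤ x.1.card ∧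
      (∀ i, ((Cg x.2 i).card : ℝ) ≤ K)
    · obtain ⟨ha, hb, hc⟩ := hx
      have := er_fixed n d p h0 h1 x.1 (Cg x.2) q ha (by
        intro i j hij
        rw [Finset.disjoint_left]
        intro v hv hv'
        simp only [Cg, Finset.mem_filter, Finset.mem_univ, true_and] at hv hv'
        rw [hv] at hv'
        exact hij (Option.some.inj hv')) (fun i => hq _ (hc i))
      refine (measure_mono (fun ω hω => hω.2.2.2)).trans (this.trans ?_)
      have hle : ENNReal.ofReal (1 - q) ≤ ENNReal.ofReal (Real.exp (-q)) :=
        ENNReal.ofReal_le_ofReal (by have := Real.add_one_le_exp (-q); linarith)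
      calc ENNReal.ofReal (1 - q) ^ (x.1.card * d)
          ≤ ENNReal.ofReal (Real.exp (-q)) ^ (x.1.card * d) := by gcongr
        _ = ENNReal.ofReal (Real.exp (-q) ^ (x.1.card * d)) :=
            (ENNReal.ofReal_pow (Real.exp_pos _).le _).symm
        _ ≤ _ := by
            apply ENNReal.ofReal_le_ofReal
            rw [← Real.exp_nat_mul]
            apply Real.exp_le_exp.2
            have : (d : ℝ) ≤ x.1.card := by exact_mod_cast hb
            have h5 : (d : ℝ) * d ≤ x.1.card * d := by gcongr
            push_cast
            nlinarith
    · have : E x = ∅ := by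
        ext ω
        simp only [Set.mem_empty_iff_false, iff_false]
        rintro ⟨a, b, c, -⟩
        exact hx ⟨a, b, c⟩
      rw [this]; simp
  have hsub : {ω : EdgeIdx n → Bool | ∃ (A : Finset (Fin n)) (C : Fin d → Finset (Fin n)),
            (∀ i, Disjoint A (C i)) ∧
            (∀ i j, i ≠ j → Disjoint (C i) (C j)) ∧
            d ≤ A.card ∧
            (∀ i, ((C i).card : ℝ) ≤ K) ∧
            (∀ i, ∀ v ∈ A, ∃ u ∈ C i, (erGraph n ω).Adj v u)} ⊆ ⋃ x ∈ Finset.univ, E x := by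
    rintro ω ⟨A, C, hAC, hC, hA, hK, hadj⟩
    let g : Fin n → Option (Fin d) := fun v =>
      if h : ∃ i, v ∈ C i then some h.choose else none
    have hg : Cg g = C := by
      funext i
      ext v
      simp only [Cg, g, Finset.mem_filter, Finset.mem_univ, true_and]
      constructor
      · intro h
        split_ifs at h with h'
        rw [← Option.some.inj h]
        exact h'.choose_spec
      · intro h
        have h' : ∃ i, v ∈ C i := ⟨i, h⟩
        rw [dif_pos h']
        congr 1
        by_contra hne
        exact Finset.disjoint_left.1 (hC _ _ hne) h'.choose_spec h
    simp only [Finset.mem_univ, Set.iUnion_true, Set.mem_iUnion]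
    refine ⟨(A, g), ?_⟩
    simp only [E, hg]
    exact ⟨hAC, hA, hK, hadj⟩
  refine (measure_mono hsub).trans ((measure_biUnion_finset_le _ _).trans ?_)
  refine (Finset.sum_le_sum (fun x _ => hE x)).trans ?_
  rw [Finset.sum_const, nsmul_eq_mul, ENNReal.ofReal_mul (by positivity)]
  gcongr
  rw [Finset.card_univ, Fintype.card_prod, Fintype.card_finset, Fintype.card_fun,
    Fintype.card_option, Fintype.card_fin, Fintype.card_fin, ← mul_pow,
    ← ENNReal.ofReal_natCast]
  apply ENNReal.ofReal_le_ofReal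
  push_cast
  have : (d : ℝ) ≤ n := by exact_mod_cast hdn
  gcongr

/-- Lemma 6 of Keusch–Steger. With `ξ = (1 - 1/α)/10` and
`d = ⌈(np)^{1-4ξ}⌉`, the probability that `G(n,p)` contains pairwise disjoint
sets `A, C_1, …, C_d` with `|A| ≥ d`, `|C_i| ≤ (1/α + ξ)·log_b(np)`, and every
`v ∈ A` having a neighbor in every `C_i`, tends to `0`. -/
theorem eliminated_colors_event_whp
    (η : ℝ) (hη0 : 0 < η) (hη1 : η < 1)
    (α : ℝ) (hα : 1 < α) (ξ : ℝ) (hξ : ξ = (1 - 1 / α) / 10)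
    (p : ℕ → ℝ) (hp0 : ∀ n, 0 < p n) (hp1 : ∀ n, p n ≤ 1 - η)
    (hpbig : Tendsto (fun n => Real.log (1 / p n) / Real.log n) atTop (nhds 0)) :
    Tendsto (fun n =>
        erMeasure n (p n) {ω : EdgeIdx n → Bool |
          ∃ (A : Finset (Fin n))
            (C : Fin (⌈((n : ℝ) * p n) ^ (1 - 4 * ξ)⌉₊) → Finset (Fin n)),
            (∀ i, Disjoint A (C i)) ∧
            (∀ i j, i ≠ j → Disjoint (C i) (C j)) ∧
            ⌈((n : ℝ) * p n) ^ (1 - 4 * ξ)⌉₊ ≤ A.card ∧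
            (∀ i, ((C i).card : ℝ) ≤
              (1 / α + ξ) * (Real.log (n * p n) / Real.log (1 / (1 - p n)))) ∧
            (∀ i, ∀ v ∈ A, ∃ u ∈ C i, (erGraph n ω).Adj v u)})
      atTop (nhds 0) := by
  have hα0 : 0 < α := by linarith
  have hinv : 1 / α < 1 := by rw [div_lt_one hα0]; exact hα
  have hinv0 : 0 < 1 / α := by positivity
  have hξ0 : 0 < ξ := by rw [hξ]; linarith
  have hξ1 : ξ < 1 := by rw [hξ]; linarith
  have hcoef : 1 / α + ξ = 1 - 9 * ξ := by rw [hξ]; ring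
  rw [hcoef]
  have hr : 0 < ξ / 2 := by linarith
  -- the log asymptotics
  have hlog : ∀ᶠ n : ℕ in atTop, Real.log (2 * ((n : ℝ) + 1)) + 1 ≤ (n : ℝ) ^ (ξ / 2) := by
    have h1 := (isLittleO_log_rpow_atTop hr).bound (show (0 : ℝ) < 1 / 2 by norm_num)
    have h1' := tendsto_natCast_atTop_atTop (R := ℝ) |>.eventually h1
    have h2 := ((tendsto_rpow_atTop hr).comp (tendsto_natCast_atTop_atTop (R := ℝ))).eventually_ge_atTop
      (2 * (Real.log 4 + 1))
    filter_upwards [h1', h2, eventually_ge_atTop 1] with n a b c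
    have hn : (1 : ℝ) ≤ n := by exact_mod_cast c
    simp only [Function.comp] at b
    have hl : 0 ≤ Real.log n := Real.log_nonneg hn
    have hp : 0 ≤ (n : ℝ) ^ (ξ / 2) := by positivity
    rw [Real.norm_of_nonneg hl, Real.norm_of_nonneg hp] at a
    have : Real.log (2 * ((n : ℝ) + 1)) ≤ Real.log (4 * n) :=
      Real.log_le_log (by linarith) (by linarith)
    have h4 : Real.log (4 * (n : ℝ)) = Real.log 4 + Real.log n :=
      Real.log_mul (by norm_num) (by linarith)
    linarith
  have hsmall : ∀ᶠ n : ℕ in atTop, Real.log (1 / p n) / Real.log n < ξ / 4 :=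
    hpbig.eventually_lt_const (by linarith)
  have hlim : Tendsto (fun n : ℕ => ENNReal.ofReal (Real.exp (-(n : ℝ)))) atTop (nhds 0) := by
    rw [← ENNReal.ofReal_zero]
    exact ENNReal.tendsto_ofReal
      (Real.tendsto_exp_neg_atTop_nhds_zero.comp (tendsto_natCast_atTop_atTop (R := ℝ)))
  refine tendsto_of_tendsto_of_tendsto_of_le_of_le' tendsto_const_nhds hlim
    (Eventually.of_forall fun _ => zero_le) ?_
  filter_upwards [hlog, hsmall, eventually_ge_atTop 2] with n hl hs hn2
  have hn : (2 : ℝ) ≤ n := by exact_mod_cast hn2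
  have hn0 : (0 : ℝ) < n := by linarith
  have hp := hp0 n
  have hpl : p n < 1 := by linarith [hp1 n]
  have hx : 0 < (n : ℝ) * p n := by positivity
  have hlogn : 0 < Real.log n := Real.log_pos (by linarith)
  have hL : 0 < Real.log (1 / (1 - p n)) := by
    apply Real.log_pos
    rw [lt_div_iff₀ (by linarith)]
    linarith
  set x := (n : ℝ) * p n with hxdef
  have hq : ∀ m : ℕ, (m : ℝ) ≤ (1 - 9 * ξ) * (Real.log x / Real.log (1 / (1 - p n))) →
      x ^ (-(1 - 9 * ξ)) ≤ (1 - p n) ^ m := by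
    intro m hm
    rw [← mul_div_assoc, le_div_iff₀ hL, one_div, Real.log_inv] at hm
    rw [Real.rpow_def_of_pos hx, ← Real.exp_log (show 0 < 1 - p n by linarith),
      ← Real.exp_nat_mul]
    apply Real.exp_le_exp.2
    linarith
  refine (er_union n _ (p n) _ (x ^ (-(1 - 9 * ξ))) hp.le hpl.le (by positivity) hq).trans ?_
  apply ENNReal.ofReal_le_ofReal
  have hd : x ^ (1 - 4 * ξ) ≤ (⌈x ^ (1 - 4 * ξ)⌉₊ : ℝ) := Nat.le_ceil _
  have hdd : x ^ (1 + ξ) ≤ x ^ (-(1 - 9 * ξ)) *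
      ((⌈x ^ (1 - 4 * ξ)⌉₊ : ℝ) * (⌈x ^ (1 - 4 * ξ)⌉₊ : ℝ)) := by
    have : x ^ (1 + ξ) = x ^ (-(1 - 9 * ξ)) * (x ^ (1 - 4 * ξ) * x ^ (1 - 4 * ξ)) := by
      rw [← Real.rpow_add hx, ← Real.rpow_add hx]
      congr 1; ring
    rw [this]
    gcongr
  have hxn : (n : ℝ) * (n : ℝ) ^ (ξ / 2) ≤ x ^ (1 + ξ) := by
    rw [div_lt_iff₀ hlogn, one_div, Real.log_inv] at hs
    have hlx : Real.log x = Real.log n + Real.log (p n) := Real.log_mul (by linarith) (by linarith)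
    have hcomp : (n : ℝ) * (n : ℝ) ^ (ξ / 2) = Real.exp (Real.log n * (1 + ξ / 2)) := by
      rw [← Real.rpow_def_of_pos hn0, Real.rpow_add hn0, Real.rpow_one]
    rw [hcomp, Real.rpow_def_of_pos hx]
    apply Real.exp_le_exp.2
    have h1 : (1 - ξ / 4) * Real.log n ≤ Real.log x := by rw [hlx]; linarith
    have h2 : (1 - ξ / 4) * Real.log n * (1 + ξ) ≤ Real.log x * (1 + ξ) := by gcongr
    have h3 : 0 ≤ Real.log n * (ξ * (1 - ξ)) := by
      have : 0 < 1 - ξ := by linarith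
      positivity
    nlinarith
  have hpow : (2 * ((n : ℝ) + 1)) ^ n = Real.exp (n * Real.log (2 * ((n : ℝ) + 1))) := by
    rw [Real.exp_nat_mul, Real.exp_log (by positivity)]
  rw [hpow, ← Real.exp_add]
  apply Real.exp_le_exp.2
  have h6 : (n : ℝ) * (Real.log (2 * ((n : ℝ) + 1)) + 1) ≤ n * (n : ℝ) ^ (ξ / 2) := by gcongr
  linarith
end

section
/- Let η ∈ (0,1) and α > 1 be constants, set ξ := (1 − 1/α)/10, and let p : ℕ → ℝ satisfy 0 < p(n) ≤ 1 − η and log(1/p(n))/log n → 0. Then for all sufficiently large n, (α·n/log_b(np) − ⌈(n·p(n))^{1−4ξ}⌉) · (1/α + ξ) · log_b(np) > n, where b := 1/(1 − p(n)) and log_b(np) := log(n·p(n))/log b. -/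
open Filter

/-- the counting inequality in Corollary 7 of Keusch–Steger.
With `ξ = (1 - 1/α)/10`, for all sufficiently large `n`,
`(α·n/log_b(np) - ⌈(np)^{1-4ξ}⌉) · (1/α + ξ) · log_b(np) > n`. -/
theorem level_bound_counting_inequality
    (η : ℝ) (hη0 : 0 < η) (hη1 : η < 1)
    (α : ℝ) (hα : 1 < α) (ξ : ℝ) (hξ : ξ = (1 - 1 / α) / 10)
    (p : ℕ → ℝ) (hp0 : ∀ n, 0 < p n) (hp1 : ∀ n, p n ≤ 1 - η)
    (hpbig : Tendsto (fun n => Real.log (1 / p n) / Real.log n) atTop (nhds 0)) :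
    ∀ᶠ n : ℕ in atTop,
      (n : ℝ) <
        (α * n / (Real.log (n * p n) / Real.log (1 / (1 - p n))) -
            (⌈((n : ℝ) * p n) ^ (1 - 4 * ξ)⌉₊ : ℝ)) *
          (1 / α + ξ) * (Real.log (n * p n) / Real.log (1 / (1 - p n))) := by
  have hα0 : 0 < α := by linarith
  have hinv : 1 / α < 1 := by rw [div_lt_one hα0]; exact hα
  have hinv0 : 0 < 1 / α := by positivity
  have hξ0 : 0 < ξ := by rw [hξ]; linarith
  have hξ1 : ξ < 1 / 10 := by rw [hξ]; linarith
  have hlogn : Tendsto (fun n : ℕ => Real.log (n : ℝ)) atTop atTop :=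
    Real.tendsto_log_atTop.comp tendsto_natCast_atTop_atTop
  have hlogx : Tendsto (fun n : ℕ => Real.log ((n : ℝ) * p n)) atTop atTop := by
    refine tendsto_atTop_mono' atTop ?_ (hlogn.const_mul_atTop (show (0 : ℝ) < 1 / 2 by norm_num))
    filter_upwards [hpbig.eventually_lt_const (show (0 : ℝ) < 1 / 2 by norm_num),
      hlogn.eventually_gt_atTop 0, eventually_gt_atTop 0] with n h1 h2 h3
    rw [div_lt_iff₀ h2, one_div, Real.log_inv] at h1
    have h3' : (n : ℝ) ≠ 0 := by exact_mod_cast h3.ne'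
    rw [Real.log_mul h3' (hp0 n).ne']
    linarith
  have hx : Tendsto (fun n : ℕ => (n : ℝ) * p n) atTop atTop := by
    refine (Real.tendsto_exp_atTop.comp hlogx).congr' ?_
    filter_upwards [eventually_gt_atTop 0] with n h3
    have h3' : (0 : ℝ) < n := by exact_mod_cast h3
    exact Real.exp_log (mul_pos h3' (hp0 n))
  have hc : 0 < α * ξ / 8 := by positivity
  have hlo := (isLittleO_log_rpow_atTop (show 0 < 4 * ξ by positivity)).bound hc
  filter_upwards [hx.eventually hlo, hx.eventually_gt_atTop 1] with n hb hx1
  have hpn := hp0 n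
  have hp1n := hp1 n
  generalize p n = q at *
  set x : ℝ := (n : ℝ) * q with hxdef
  have hx0 : 0 < x := by linarith
  have hl : 0 < Real.log x := Real.log_pos hx1
  have hpw : 0 < x ^ (4 * ξ) := Real.rpow_pos_of_pos hx0 _
  rw [Real.norm_of_nonneg hl.le, Real.norm_of_nonneg hpw.le] at hb
  have hB : q ≤ Real.log (1 / (1 - q)) := by
    rw [one_div, Real.log_inv]
    have := Real.log_le_sub_one_of_pos (show 0 < 1 - q by linarith)
    linarith
  set B := Real.log (1 / (1 - q)) with hBdef
  have hL0 : 0 < Real.log x / B := div_pos hl (by linarith)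
  have hL1 : Real.log x / B ≤ Real.log x / q := div_le_div_of_nonneg_left hl.le hpn hB
  set L := Real.log x / B with hLdef
  have hy1 : 1 ≤ x ^ (1 - 4 * ξ) := Real.one_le_rpow hx1.le (by linarith)
  have hC : (⌈x ^ (1 - 4 * ξ)⌉₊ : ℝ) < x ^ (1 - 4 * ξ) + 1 := Nat.ceil_lt_add_one (by linarith)
  have hC0 : (0 : ℝ) ≤ (⌈x ^ (1 - 4 * ξ)⌉₊ : ℝ) := Nat.cast_nonneg _
  generalize (⌈x ^ (1 - 4 * ξ)⌉₊ : ℝ) = C at *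
  have hmul : x ^ (1 - 4 * ξ) * x ^ (4 * ξ) = x := by
    rw [← Real.rpow_add hx0]; simp
  have hn : x / q = n := by rw [hxdef]; field_simp
  have hn0 : (0 : ℝ) < n := by rw [← hn]; positivity
  have hCL : C * L ≤ α * ξ / 4 * n := by
    calc C * L ≤ (2 * x ^ (1 - 4 * ξ)) * (Real.log x / q) := by
          apply mul_le_mul (by linarith) hL1 hL0.le (by linarith)
      _ ≤ (2 * x ^ (1 - 4 * ξ)) * ((α * ξ / 8 * x ^ (4 * ξ)) / q) := by gcongr
      _ = α * ξ / 4 * ((x ^ (1 - 4 * ξ) * x ^ (4 * ξ)) / q) := by ring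
      _ = α * ξ / 4 * n := by rw [hmul, hn]
  have hkey : (α * n / L - C) * (1 / α + ξ) * L = n + α * ξ * n - C * L * (1 / α + ξ) := by
    field_simp
  rw [hkey]
  have h1 : C * L * (1 / α + ξ) ≤ C * L * 2 :=
    mul_le_mul_of_nonneg_left (by linarith) (by positivity)
  have h2 : 0 < α * ξ * n := by positivity
  linarith
end

section
/- Let ξ ∈ (0,1) be a real number, let a ≥ 2 be an integer with ((1−ξ)·a + 1)/(a − 1) ≤ 1 − ξ/2, let N be a real number with N ≥ 8/ξ, let k ≥ 0 be a real number, let ℓ' be a real number with 1 ≤ ℓ' ≤ (1−ξ)·a + 1 and ℓ' ≤ a − 1, and let C be a real number with C ≤ k·ℓ'·(N+1)·(a−ℓ')/((N−1)·(a−1)). Then k − C/(a − ℓ') − (ξ/8)·k ≥ (ξ/8)·k. In particular, (N+1)/(N−1)·(1 − ξ/2) ≤ 1 − ξ/4 whenever N ≥ 8/ξ. -/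
/-- the arithmetic core of Corollary 9 of Keusch–Steger.
Under the stated conditions on `ξ, a, N, k, ℓ', C`, the number of surviving
bins with load at most `a` is at least
`k - C/(a-ℓ') - (ξ/8)·k ≥ (ξ/8)·k`; in particular
`(N+1)/(N-1)·(1-ξ/2) ≤ 1-ξ/4` whenever `N ≥ 8/ξ`. -/
theorem balls_and_bins_corollary_arithmetic
    (ξ : ℝ) (hξ0 : 0 < ξ) (hξ1 : ξ < 1)
    (a : ℕ) (ha : 2 ≤ a)
    (ha2 : ((1 - ξ) * (a : ℝ) + 1) / ((a : ℝ) - 1) ≤ 1 - ξ / 2)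
    (N : ℝ) (hN : 8 / ξ ≤ N)
    (k : ℝ) (hk : 0 ≤ k)
    (ℓ' : ℝ) (hℓ1 : 1 ≤ ℓ') (hℓ2 : ℓ' ≤ (1 - ξ) * (a : ℝ) + 1) (hℓ3 : ℓ' ≤ (a : ℝ) - 1)
    (C : ℝ) (hC : C ≤ k * ℓ' * (N + 1) * ((a : ℝ) - ℓ') / ((N - 1) * ((a : ℝ) - 1))) :
    (ξ / 8) * k ≤ k - C / ((a : ℝ) - ℓ') - (ξ / 8) * k ∧
      (N + 1) / (N - 1) * (1 - ξ / 2) ≤ 1 - ξ / 4 := by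
  have haR : (2 : ℝ) ≤ (a : ℝ) := by exact_mod_cast ha
  have hNξ : 8 ≤ N * ξ := (div_le_iff₀ hξ0).1 hN
  have hN8 : 8 < N := by
    by_contra h
    push Not at h
    nlinarith
  have hN1 : 0 < N - 1 := by linarith
  have ha1 : 0 < (a : ℝ) - 1 := by linarith
  have hal : 0 < (a : ℝ) - ℓ' := by linarith
  have h2 : (N + 1) / (N - 1) * (1 - ξ / 2) ≤ 1 - ξ / 4 := by
    rw [div_mul_eq_mul_div, div_le_iff₀ hN1]
    nlinarith
  refine ⟨?_, h2⟩
  have h3 : ℓ' / ((a : ℝ) - 1) ≤ 1 - ξ / 2 :=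
    le_trans (div_le_div_of_nonneg_right hℓ2 ha1.le) ha2
  have hr : 0 ≤ (N + 1) / (N - 1) := div_nonneg (by linarith) hN1.le
  have h4 : (N + 1) / (N - 1) * (ℓ' / ((a : ℝ) - 1)) ≤ 1 - ξ / 4 :=
    le_trans (mul_le_mul_of_nonneg_left h3 hr) h2
  have h5 : C / ((a : ℝ) - ℓ') ≤ k * ((N + 1) / (N - 1) * (ℓ' / ((a : ℝ) - 1))) := by
    rw [div_le_iff₀ hal]
    refine hC.trans (le_of_eq ?_)
    field_simp
  have h6 := mul_le_mul_of_nonneg_left h4 hk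
  linarith
end

section
/- Let η ∈ (0,1) and α > 1 be constants, set ξ := (1 − 1/α)/10, let h be a constant with 4ξ < h ≤ 1/α + 3ξ, set L := (h + 2ξ)/(2ξ) and c := 1/(L + 1), and let p : ℕ → ℝ satisfy 0 < p(n) ≤ 1 − η and log(1/p(n))/log n → 0. Then c^L · (q(h)·(n·p(n))^{−6ξ})^{2L} / (n·p(n))^{h+ξ} → ∞ as n → ∞, where b := 1/(1 − p(n)), log_b(np) := log(n·p(n))/log b, β(h) := α·ξ·n·(np)^{−h}/(10·log_b(np)), and q(h) := β(h)/(log n)². -/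
open Filter

/-- `log_b(np)` with `b = 1/(1-p)`. -/
noncomputable def logbNP (n : ℕ) (p : ℝ) : ℝ :=
  Real.log (n * p) / Real.log (1 / (1 - p))

/-- `β(h) = α·ξ·n·(np)^{-h} / (10·log_b(np))`. -/
noncomputable def betaKS (α ξ h : ℝ) (n : ℕ) (p : ℝ) : ℝ :=
  α * ξ * n * ((n : ℝ) * p) ^ (-h) / (10 * logbNP n p)

/-- `q(h) = β(h)/(log n)²`. -/
noncomputable def qKS (α ξ h : ℝ) (n : ℕ) (p : ℝ) : ℝ :=
  betaKS α ξ h n p / (Real.log n) ^ 2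

/-- the concluding asymptotics in the proof of Lemma 6,
`l:color`, of Keusch–Steger. With `L = (h+2ξ)/(2ξ)` and `c = 1/(L+1)`,
`c^L · (q(h)·(np)^{-6ξ})^{2L} ≫ (np)^{h+ξ}`. -/
theorem color_arranging_final_asymptotics
    (η : ℝ) (hη0 : 0 < η) (hη1 : η < 1)
    (α : ℝ) (hα : 1 < α) (ξ : ℝ) (hξ : ξ = (1 - 1 / α) / 10)
    (h : ℝ) (hh1 : 4 * ξ < h) (hh2 : h ≤ 1 / α + 3 * ξ)
    (L : ℝ) (hL : L = (h + 2 * ξ) / (2 * ξ)) (c : ℝ) (hc : c = 1 / (L + 1))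
    (p : ℕ → ℝ) (hp0 : ∀ n, 0 < p n) (hp1 : ∀ n, p n ≤ 1 - η)
    (hpbig : Tendsto (fun n => Real.log (1 / p n) / Real.log n) atTop (nhds 0)) :
    Tendsto (fun n : ℕ =>
        c ^ L * (qKS α ξ h n (p n) * ((n : ℝ) * p n) ^ (-(6 * ξ))) ^ (2 * L) /
          ((n : ℝ) * p n) ^ (h + ξ))
      atTop atTop := by
  have hα0 : 0 < α := by linarith
  have hinv : 1 / α < 1 := by rw [div_lt_one hα0]; exact hα
  have hξ0 : 0 < ξ := by rw [hξ]; linarith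
  have hh0 : 0 < h := by linarith
  have hh3 : h ≤ 1 - 7 * ξ := by
    have : 1 / α = 1 - 10 * ξ := by rw [hξ]; ring
    linarith
  have hL0 : 0 < L := by rw [hL]; positivity
  have h2L : ξ * (2 * L) = h + 2 * ξ := by rw [hL]; field_simp
  have hc0 : 0 < c := by rw [hc]; positivity
  obtain ⟨K, hK⟩ : ∃ K, K = α * ξ / 10 := ⟨_, rfl⟩
  have hK0 : 0 < K := by rw [hK]; positivity
  have hlim : Tendsto (fun n : ℕ => c ^ L * K ^ (2 * L) * (n : ℝ) ^ (ξ / 4)) atTop atTop := by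
    apply Tendsto.const_mul_atTop (by positivity)
    exact (tendsto_rpow_atTop (by positivity)).comp tendsto_natCast_atTop_atTop
  refine tendsto_atTop_mono' _ ?_ hlim
  have hlo : ∀ᶠ n : ℕ in atTop, ‖Real.log n ^ (6 * L)‖ ≤ 1 * ‖(n : ℝ) ^ (ξ / 4)‖ :=
    tendsto_natCast_atTop_atTop.eventually
      ((isLittleO_log_rpow_rpow_atTop (6 * L) (show 0 < ξ / 4 by positivity)).bound one_pos)
  have hhalf := hpbig.eventually (gt_mem_nhds (show (0 : ℝ) < 1 / 2 by norm_num))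
  filter_upwards [hlo, hhalf, eventually_ge_atTop 2] with n hlo hhalf hn
  have hn2 : (2 : ℝ) ≤ n := by exact_mod_cast hn
  have hn0 : (0 : ℝ) < n := by linarith
  have hlog : 0 < Real.log n := Real.log_pos (by linarith)
  have hp := hp0 n
  have hp' : p n < 1 := by linarith [hp1 n]
  generalize p n = r at *
  rw [div_lt_iff₀ hlog, one_div, Real.log_inv] at hhalf
  have hx0 : 0 < (n : ℝ) * r := by positivity
  have hlogx : Real.log (n * r) = Real.log n + Real.log r := Real.log_mul hn0.ne' hp.ne'
  have hlr : Real.log r ≤ 0 := Real.log_nonpos hp.le hp'.le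
  have hlx0 : 0 < Real.log (n * r) := by linarith
  have hx1 : 1 ≤ (n : ℝ) * r := by
    by_contra hcon
    push Not at hcon
    linarith [Real.log_nonpos hx0.le hcon.le]
  have hxn : (n : ℝ) ^ (1 / 2 : ℝ) ≤ n * r := by
    rw [← Real.log_le_log_iff (by positivity) hx0, Real.log_rpow hn0]
    linarith
  have hb : r ≤ Real.log (1 / (1 - r)) := by
    rw [one_div, Real.log_inv]
    linarith [Real.log_le_sub_one_of_pos (show 0 < 1 - r by linarith)]
  have hb0 : 0 < Real.log (1 / (1 - r)) := by linarith
  have hq : K * ((n : ℝ) * r) ^ ξ / Real.log n ^ 3 ≤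
      qKS α ξ h n r * ((n : ℝ) * r) ^ (-(6 * ξ)) := by
    have e1 : qKS α ξ h n r * ((n : ℝ) * r) ^ (-(6 * ξ)) =
        K * (n * Real.log (1 / (1 - r)) * (((n : ℝ) * r) ^ (-h) * ((n : ℝ) * r) ^ (-(6 * ξ)))) /
          (Real.log (n * r) * Real.log n ^ 2) := by
      unfold qKS betaKS logbNP
      rw [hK]
      field_simp
    have e2 : ((n : ℝ) * r) ^ ξ ≤
        n * r * (((n : ℝ) * r) ^ (-h) * ((n : ℝ) * r) ^ (-(6 * ξ))) := by
      rw [← Real.rpow_add hx0, ← Real.rpow_one_add' hx0.le (by linarith)]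
      exact Real.rpow_le_rpow_of_exponent_le hx1 (by linarith)
    rw [e1]
    have e3 : Real.log (n * r) * Real.log n ^ 2 ≤ Real.log n ^ 3 := by
      rw [pow_succ' _ 2]
      exact mul_le_mul_of_nonneg_right (by linarith) (by positivity)
    have e4 : ((n : ℝ) * r) ^ ξ ≤
        n * Real.log (1 / (1 - r)) * (((n : ℝ) * r) ^ (-h) * ((n : ℝ) * r) ^ (-(6 * ξ))) :=
      e2.trans (by gcongr)
    gcongr
  have hpow : K ^ (2 * L) * ((n : ℝ) * r) ^ (h + 2 * ξ) / Real.log n ^ (6 * L) ≤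
      (qKS α ξ h n r * ((n : ℝ) * r) ^ (-(6 * ξ))) ^ (2 * L) := by
    refine le_trans (le_of_eq ?_) (Real.rpow_le_rpow (by positivity) hq (by positivity))
    rw [Real.div_rpow (by positivity) (by positivity), Real.mul_rpow hK0.le (by positivity),
      ← Real.rpow_mul hx0.le, h2L, ← Real.rpow_natCast, ← Real.rpow_mul hlog.le]
    congr 2
    push_cast
    ring
  rw [one_mul, Real.norm_of_nonneg (by positivity), Real.norm_of_nonneg (by positivity)] at hlo
  rw [le_div_iff₀ (by positivity), mul_assoc, mul_assoc]
  refine mul_le_mul_of_nonneg_left (le_trans ?_ hpow) (by positivity)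
  rw [mul_div_assoc]
  refine mul_le_mul_of_nonneg_left ?_ (by positivity)
  rw [le_div_iff₀ (by positivity)]
  have f1 : ((n : ℝ) * r) ^ (h + 2 * ξ) = ((n : ℝ) * r) ^ ξ * ((n : ℝ) * r) ^ (h + ξ) := by
    rw [← Real.rpow_add hx0]; congr 1; ring
  have f2 : (n : ℝ) ^ (ξ / 4) * (n : ℝ) ^ (ξ / 4) ≤ ((n : ℝ) * r) ^ ξ := by
    refine le_trans (le_of_eq ?_) (Real.rpow_le_rpow (by positivity) hxn hξ0.le)
    rw [← Real.rpow_add hn0, ← Real.rpow_mul hn0.le]; congr 1; ring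
  rw [f1]
  calc (n : ℝ) ^ (ξ / 4) * ((n : ℝ) * r) ^ (h + ξ) * Real.log n ^ (6 * L)
      ≤ (n : ℝ) ^ (ξ / 4) * ((n : ℝ) * r) ^ (h + ξ) * (n : ℝ) ^ (ξ / 4) := by gcongr
    _ = (n : ℝ) ^ (ξ / 4) * (n : ℝ) ^ (ξ / 4) * ((n : ℝ) * r) ^ (h + ξ) := by ring
    _ ≤ _ := by gcongr
end
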